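/- arXiv:2407.01341 — 2 statements merged into one kernel-verified Lean document; each statement's English description precedes it below -/
import Mathlib

section
/- There exists an absolute constant C > 0 such that, for any ψ ∈ 𝒜(I_π) with finiteness domain I_d (d ≤ π), it holds λ₁(I_d, 2ψ²) ≥ 2 + C(π − d)³. -/
open MeasureTheory Real Set Filter
open scoped ENNReal

noncomputable section

/-- Test class for the Dirichlet eigenvalue with measure potential on `(a,b)`:
`C¹` functions vanishing outside the open interval (a core of `H¹₀`). -/
def TestFun (a b : ℝ) (v : ℝ → ℝ) : Prop :=
  ContDiff ℝ 1 v ∧ ∀ x ∉ Ioo a b, v x = 0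

/-- Rayleigh quotient for the Dirichlet eigenvalue with (nonnegative, possibly infinite)
measure potential `q` on the interval `(a,b)`. -/
def dirRQ (a b : ℝ) (q : Measure ℝ) (v : ℝ → ℝ) : ℝ≥0∞ :=
  ((∫⁻ x in Ioo a b, ENNReal.ofReal ((deriv v x) ^ 2)) +
      ∫⁻ x in Ioo a b, ENNReal.ofReal ((v x) ^ 2) ∂q) /
    ∫⁻ x in Ioo a b, ENNReal.ofReal ((v x) ^ 2)

/-- `λ₁((a,b), q)`, the first Dirichlet eigenvalue with measure potential `q`. -/
def lam1 (a b : ℝ) (q : Measure ℝ) : ℝ≥0∞ :=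
  ⨅ (v : ℝ → ℝ)
    (_ : TestFun a b v ∧ (∫⁻ x in Ioo a b, ENNReal.ofReal ((v x) ^ 2)) ≠ 0),
    dirRQ a b q v

/-- The class `𝒜(I_π)`: an increasing function `psi` with finiteness domain `dom ⊆ I_π`
(an interval), satisfying the improved-monotonicity gap condition, together with the
measure `nu` representing its distributional derivative `ψ'` on `dom`. -/
structure PsiA where
  dom : Set ℝ
  domSub : dom ⊆ Ioo (-(π / 2)) (π / 2)
  domConn : dom.OrdConnected
  psi : ℝ → ℝ
  mono : MonotoneOn psi dom
  gap : ∀ ⦃x⦄, x ∈ dom → ∀ ⦃y⦄, y ∈ dom → x < y →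
    2 * tan ((y - x) / 2) ≤ psi y - psi x
  nu : Measure ℝ
  nu_eq : ∀ ⦃x⦄, x ∈ dom → ∀ ⦃y⦄, y ∈ dom → x ≤ y →
    nu (Ioc x y) = ENNReal.ofReal (psi y - psi x)

/-- The measure `ψ'`, extended by `+∞` on `I_π \ dom ψ`. -/
def PsiA.derivM (P : PsiA) : Measure ℝ :=
  P.nu.restrict P.dom + (∞ : ℝ≥0∞) • volume.restrict (Ioo (-(π / 2)) (π / 2) \ P.dom)

/-- The measure `ψ² dx`, extended by `+∞` on `I_π \ dom ψ`. -/
def PsiA.sqM (P : PsiA) : Measure ℝ :=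
  (volume.restrict P.dom).withDensity (fun x => ENNReal.ofReal ((P.psi x) ^ 2)) +
    (∞ : ℝ≥0∞) • volume.restrict (Ioo (-(π / 2)) (π / 2) \ P.dom)

/-- The measure `q = ψ' + ψ²`, extended by `+∞` on `I_π \ dom ψ`. -/
def PsiA.qM (P : PsiA) : Measure ℝ :=
  P.nu.restrict P.dom +
    (volume.restrict P.dom).withDensity (fun x => ENNReal.ofReal ((P.psi x) ^ 2)) +
    (∞ : ℝ≥0∞) • volume.restrict (Ioo (-(π / 2)) (π / 2) \ P.dom)

/-- The function `cos² x` on `I_π`, extended by zero. -/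
def cosSq : ℝ → ℝ := fun x => if x ∈ Ioo (-(π / 2)) (π / 2) then cos x ^ 2 else 0

/-- The measure with density `1 + 2 tan² x` on `I_π`. -/
def tanWeight : Measure ℝ :=
  (volume.restrict (Ioo (-(π / 2)) (π / 2))).withDensity
    fun x => ENNReal.ofReal (1 + 2 * tan x ^ 2)

/-!
Let `v` be a test function, `m(t) = |{v² > t}|` and `f` nonnegative and increasing. As `v²` takes
almost every level at least twice, integrating `2|v v'| f(m(v²)) ≤ v'² + f(m(v²))² v²` gives
`∫ 2 f(m(t)) dt ≤ ∫ v'² + ∫ ∫_0^{m(t)} f(u)² du dt`. Comparing level by level, the bound `λ ≤ λ₁(q)`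
follows once `λ|U| + ∫_0^{|U|} f² ≤ 2 f(|U|) + q(U)` for all open `U`.

The gap condition on `ψ` yields `∫_U ψ² ≥ ∫_0^{|U|} tan²(u/2) du` by comparing distribution
functions: a set on which `ψ² ≤ tan²(s/2)` has diameter at most `s`. Hence for `q = 2ψ²` it suffices
that `f`, as a function of `|U|/2 ∈ [0, d/2]`, satisfies the Riccati inequality
`λ + f² ≤ f' + 2 tan²`. For `d = π` and `λ = 2` it is solved by `f = 2 tan`; for `d < π` there is
room for a perturbation of size `cos³(d/2)`, hence for a gain in `λ` of the same size.
-/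

open scoped NNReal Topology

section Rearrangement

variable {α β : Type*} [MeasurableSpace α] [MeasurableSpace β]

theorem lintegral_ofReal_eq_lintegral_Ioo_meas_lt {μ : Measure α} {p : α → ℝ} {M : ℝ}
    (hp : AEMeasurable p μ) (hp₀ : ∀ x, 0 ≤ p x) (hpM : ∀ x, p x ≤ M) :
    ∫⁻ x, ENNReal.ofReal (p x) ∂μ = ∫⁻ t in Ioo 0 M, μ {x | t < p x} := by
  have hsupp : Function.support (fun t => μ {x | t < p x}) ⊆ Iio M := fun t ht => by
    by_contra hMt
    refine ht ?_
    simp [not_lt.2 ((hpM _).trans (not_lt.1 hMt))]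
  rw [lintegral_eq_lintegral_meas_lt μ (Eventually.of_forall hp₀) hp, ← Iio_inter_Ioi,
    ← Measure.restrict_restrict measurableSet_Iio, setLIntegral_eq_of_support_subset hsupp]

theorem lintegral_coe_le_of_meas_lt_le {μ : Measure α} {ν : Measure β} {f : α → ℝ≥0}
    {g : β → ℝ≥0} (hf : AEMeasurable f μ) (hg : AEMeasurable g ν)
    (h : ∀ t, μ {x | t < f x} ≤ ν {y | t < g y}) :
    ∫⁻ x, f x ∂μ ≤ ∫⁻ y, g y ∂ν := by
  simp_rw [← ENNReal.ofReal_coe_nnreal]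
  rw [lintegral_eq_lintegral_meas_lt (f := fun x => (f x : ℝ)) μ
      (.of_forall fun x => (f x).2) hf.coe_nnreal_real,
    lintegral_eq_lintegral_meas_lt (f := fun y => (g y : ℝ)) ν
      (.of_forall fun y => (g y).2) hg.coe_nnreal_real]
  refine setLIntegral_mono' measurableSet_Ioi fun t ht => ?_
  lift t to ℝ≥0 using ht.le
  exact_mod_cast h t

theorem antitone_measureReal_lt (μ : Measure α) [IsFiniteMeasure μ] (p : α → ℝ) :
    Antitone fun t => μ.real {x | t < p x} := fun _ _ hst =>
  measureReal_mono fun _ hx => hst.trans_lt hx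

-- On `{t < p}`, `x ↦ μ {p > p x}` would be distributed like Lebesgue measure on `(0, μ {p > t})`
-- if `p` had no level set of positive measure; such level sets only make it smaller.
theorem setLIntegral_comp_measureReal_lt_le {μ : Measure α} [IsFiniteMeasure μ] {p : α → ℝ}
    (hp : Measurable p) {g : ℝ → ℝ≥0} (hg : Monotone g) (t : ℝ) :
    ∫⁻ x in {x | t < p x}, g (μ.real {y | p x < p y}) ∂μ ≤
      ∫⁻ u in Ioo 0 (μ.real {y | t < p y}), g u := by
  set m : ℝ → ℝ := fun s => μ.real {y | s < p y}
  have hgm : Measurable fun s => g (m s) :=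
    hg.measurable.comp (antitone_measureReal_lt μ p).measurable
  have hgmp : Measurable fun x => g (m (p x)) := hgm.comp hp
  refine lintegral_coe_le_of_meas_lt_le hgmp.aemeasurable hg.measurable.aemeasurable
    fun τ => ?_
  have hL : MeasurableSet {s | τ < g (m s) ∧ t < s} :=
    (measurableSet_lt measurable_const hgm).inter measurableSet_Ioi
  rw [Measure.restrict_apply (measurableSet_lt measurable_const hgmp),
    Measure.restrict_apply (measurableSet_lt measurable_const hg.measurable)]
  change μ (p ⁻¹' {s | τ < g (m s) ∧ t < s}) ≤ _
  rw [← Measure.map_apply hp hL, hL.measure_eq_iSup_isCompact]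
  refine iSup₂_le fun K hKL => iSup_le fun hK => ?_
  rcases K.eq_empty_or_nonempty with rfl | hne
  · simp
  obtain ⟨s, hsK, hs⟩ := hK.exists_isGreatest hne
  have hKs : μ (p ⁻¹' K) + μ {y | s < p y} ≤ μ {y | t < p y} := by
    rw [← measure_union _ (measurableSet_lt measurable_const hp)]
    · refine measure_mono (union_subset (fun x hx => (hKL hx).2) fun x hx => ?_)
      exact (hKL hsK).2.trans hx
    · exact disjoint_left.2 fun x hx hsx => (hs hx).not_gt hsx
  calc μ.map p K = μ (p ⁻¹' K) := Measure.map_apply hp hK.measurableSet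
    _ ≤ μ {y | t < p y} - μ {y | s < p y} :=
      ENNReal.le_sub_of_add_le_right (measure_ne_top _ _) hKs
    _ = volume (Ioo (m s) (m t)) := by
      rw [Real.volume_Ioo, ENNReal.ofReal_sub _ measureReal_nonneg, ofReal_measureReal,
        ofReal_measureReal]
    _ ≤ volume ({u | τ < g u} ∩ Ioo 0 (m t)) := measure_mono fun u hu =>
      ⟨(hKL hsK).1.trans_le (hg hu.1.le), measureReal_nonneg.trans_lt hu.1, hu.2⟩

theorem lintegral_comp_measureReal_lt_mul_le {μ : Measure α} [IsFiniteMeasure μ] {p : α → ℝ}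
    {M : ℝ} (hp : Measurable p) (hp₀ : ∀ x, 0 ≤ p x) (hpM : ∀ x, p x ≤ M) {g : ℝ → ℝ≥0}
    (hg : Monotone g) :
    ∫⁻ x, g (μ.real {y | p x < p y}) * ENNReal.ofReal (p x) ∂μ ≤
      ∫⁻ t in Ioo 0 M, ∫⁻ u in Ioo 0 (μ.real {y | t < p y}), g u := by
  have hw : Measurable fun x => (g (μ.real {y | p x < p y}) : ℝ≥0∞) :=
    ((hg.measurable.comp (antitone_measureReal_lt μ p).measurable).comp hp).coe_nnreal_ennreal
  calc ∫⁻ x, g (μ.real {y | p x < p y}) * ENNReal.ofReal (p x) ∂μ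
      = ∫⁻ x, ENNReal.ofReal (p x) ∂μ.withDensity fun x => g (μ.real {y | p x < p y}) :=
        (lintegral_withDensity_eq_lintegral_mul _ hw hp.ennreal_ofReal).symm
    _ = ∫⁻ t in Ioo 0 M, ∫⁻ x in {x | t < p x}, g (μ.real {y | p x < p y}) ∂μ := by
        rw [lintegral_ofReal_eq_lintegral_Ioo_meas_lt hp.aemeasurable hp₀ hpM]
        exact lintegral_congr fun t =>
          withDensity_apply _ (measurableSet_lt measurable_const hp)
    _ ≤ ∫⁻ t in Ioo 0 M, ∫⁻ u in Ioo 0 (μ.real {y | t < p y}), g u :=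
        lintegral_mono fun t => setLIntegral_comp_measureReal_lt_le hp hg t

end Rearrangement

section Area

variable {p p' : ℝ → ℝ} {g : ℝ → ℝ≥0∞}

theorem setLIntegral_le_lintegral_abs_deriv_mul {S T : Set ℝ} (hS : MeasurableSet S)
    (hpm : Measurable p) (hp : ∀ x ∈ S, HasDerivWithinAt p (p' x) S x) (hT : T ⊆ p '' S)
    (hg : Measurable g) :
    ∫⁻ t in T, g t ≤ ∫⁻ x in S, ENNReal.ofReal |p' x| * g (p x) := by
  have hp'm : AEMeasurable (fun x => ENNReal.ofReal |p' x|) (volume.restrict S) := by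
    simpa using aemeasurable_ofReal_abs_det_fderivWithin volume hS
      fun x hx => (hp x hx).hasFDerivWithinAt
  have hle : volume.restrict T ≤
      ((volume.restrict S).withDensity fun x => ENNReal.ofReal |p' x|).map p := by
    refine Measure.le_iff.2 fun B hB => ?_
    rw [Measure.map_apply hpm hB, withDensity_apply _ (hpm hB), Measure.restrict_apply hB,
      Measure.restrict_restrict (hpm hB)]
    calc volume (B ∩ T) ≤ volume (p '' (p ⁻¹' B ∩ S)) := measure_mono fun t ht => by
          obtain ⟨x, hx, rfl⟩ := hT ht.2
          exact ⟨x, ⟨ht.1, hx⟩, rfl⟩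
      _ ≤ ∫⁻ x in p ⁻¹' B ∩ S, ENNReal.ofReal |p' x| := by
          simpa using addHaar_image_le_lintegral_abs_det_fderiv volume ((hpm hB).inter hS)
            fun x hx => ((hp x hx.2).mono inter_subset_right).hasFDerivWithinAt
  calc ∫⁻ t in T, g t
      ≤ ∫⁻ t, g t ∂((volume.restrict S).withDensity fun x => ENNReal.ofReal |p' x|).map p :=
        lintegral_mono' hle le_rfl
    _ = ∫⁻ x in S, ENNReal.ofReal |p' x| * g (p x) := by
        rw [lintegral_map hg hpm]
        exact lintegral_withDensity_eq_lintegral_mul₀ hp'm (hg.comp hpm).aemeasurable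

-- Between its zeros `a` and `b`, `p` takes each value in `(0, p x₀)` on either side of `x₀`.
theorem two_mul_setLIntegral_Ioo_le_lintegral_abs_deriv_mul {a b x₀ : ℝ} (hx₀ : x₀ ∈ Ioo a b)
    (hp : ∀ x, HasDerivAt p (p' x) x) (ha : p a = 0) (hb : p b = 0) (hg : Measurable g) :
    2 * ∫⁻ t in Ioo 0 (p x₀), g t ≤ ∫⁻ x in Ioo a b, ENNReal.ofReal |p' x| * g (p x) := by
  have hpc : Continuous p := continuous_iff_continuousAt.2 fun x => (hp x).continuousAt
  have hleft : Ioo 0 (p x₀) ⊆ p '' Ioo a x₀ :=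
    ha ▸ intermediate_value_Ioo hx₀.1.le hpc.continuousOn
  have hright : Ioo 0 (p x₀) ⊆ p '' Ioo x₀ b :=
    hb ▸ intermediate_value_Ioo' hx₀.2.le hpc.continuousOn
  have hdisj : Disjoint (Ioo a x₀) (Ioo x₀ b) :=
    disjoint_left.2 fun x hx hx' => lt_asymm hx.2 hx'.1
  calc 2 * ∫⁻ t in Ioo 0 (p x₀), g t
      = (∫⁻ t in Ioo 0 (p x₀), g t) + ∫⁻ t in Ioo 0 (p x₀), g t := two_mul _
    _ ≤ (∫⁻ x in Ioo a x₀, ENNReal.ofReal |p' x| * g (p x)) +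
          ∫⁻ x in Ioo x₀ b, ENNReal.ofReal |p' x| * g (p x) :=
        add_le_add
          (setLIntegral_le_lintegral_abs_deriv_mul measurableSet_Ioo hpc.measurable
            (fun x _ => (hp x).hasDerivWithinAt) hleft hg)
          (setLIntegral_le_lintegral_abs_deriv_mul measurableSet_Ioo hpc.measurable
            (fun x _ => (hp x).hasDerivWithinAt) hright hg)
    _ = ∫⁻ x in Ioo a x₀ ∪ Ioo x₀ b, ENNReal.ofReal |p' x| * g (p x) :=
        (lintegral_union measurableSet_Ioo hdisj).symm
    _ ≤ ∫⁻ x in Ioo a b, ENNReal.ofReal |p' x| * g (p x) :=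
        lintegral_mono_set (union_subset (Ioo_subset_Ioo_right hx₀.2.le)
          (Ioo_subset_Ioo_left hx₀.1.le))

end Area

/-- The distribution function `t ↦ |{x ∈ (a, b) : v(x)² > t}|`; as `v²` has the same superlevel
sets as `|v|`, it parametrises the superlevel sets of `|v|` by their length. -/
def sqDistrib (a b : ℝ) (v : ℝ → ℝ) (t : ℝ) : ℝ :=
  (volume.restrict (Ioo a b)).real {x | t < v x ^ 2}

theorem antitone_sqDistrib (a b : ℝ) (v : ℝ → ℝ) : Antitone (sqDistrib a b v) :=
  antitone_measureReal_lt _ _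

theorem sqDistrib_le {a b : ℝ} (hab : a ≤ b) (v : ℝ → ℝ) (t : ℝ) : sqDistrib a b v t ≤ b - a := by
  calc sqDistrib a b v t ≤ (volume.restrict (Ioo a b)).real univ := measureReal_mono (subset_univ _)
    _ = b - a := by rw [measureReal_restrict_apply_univ, Real.volume_real_Ioo_of_le hab]

namespace TestFun

variable {a b t : ℝ} {v : ℝ → ℝ}

theorem hasDerivAt_sq (hv : TestFun a b v) (x : ℝ) :
    HasDerivAt (fun y => v y ^ 2) (2 * v x * deriv v x) x := by
  simpa using ((hv.1.differentiable one_ne_zero).differentiableAt.hasDerivAt (x := x)).fun_pow 2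

theorem continuous_sq (hv : TestFun a b v) : Continuous fun x => v x ^ 2 :=
  hv.1.continuous.pow 2

theorem exists_forall_sq_le (hv : TestFun a b v)
    (hv₀ : ∫⁻ x in Ioo a b, ENNReal.ofReal (v x ^ 2) ≠ 0) :
    ∃ x₀ ∈ Ioo a b, ∀ x, v x ^ 2 ≤ v x₀ ^ 2 := by
  obtain ⟨y, hy, hvy⟩ : ∃ y ∈ Ioo a b, v y ≠ 0 := by
    by_contra! hzero
    exact hv₀ (setLIntegral_eq_zero measurableSet_Ioo fun x hx => by simp [hzero x hx])
  obtain ⟨x₀, -, hmax⟩ := isCompact_Icc.exists_isMaxOn ⟨y, Ioo_subset_Icc_self hy⟩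
    hv.continuous_sq.continuousOn
  have hle : ∀ x, v x ^ 2 ≤ v x₀ ^ 2 := fun x => by
    by_cases hx : x ∈ Ioo a b
    · exact hmax (Ioo_subset_Icc_self hx)
    · simp [hv.2 x hx, sq_nonneg]
  refine ⟨x₀, by_contra fun hx₀ => hvy ?_, hle⟩
  simpa [hv.2 x₀ hx₀] using hle y

theorem lintegral_ofReal_sq_ne_top (hv : TestFun a b v) :
    ∫⁻ x in Ioo a b, ENNReal.ofReal (v x ^ 2) ≠ ∞ :=
  ((hv.continuous_sq.integrableOn_Icc.mono_set Ioo_subset_Icc_self).lintegral_lt_top).ne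

theorem setOf_lt_sq_subset (hv : TestFun a b v) (ht : 0 ≤ t) : {x | t < v x ^ 2} ⊆ Ioo a b :=
  fun x (hx : t < v x ^ 2) => by_contra fun hxI => hx.not_ge (by simpa [hv.2 x hxI] using ht)

theorem sqDistrib_eq (hv : TestFun a b v) (ht : 0 ≤ t) :
    sqDistrib a b v t = volume.real {x | t < v x ^ 2} := by
  rw [sqDistrib, measureReal_restrict_apply' measurableSet_Ioo,
    inter_eq_left.2 (hv.setOf_lt_sq_subset ht)]

theorem lintegral_ofReal_sq_eq (hv : TestFun a b v) {M : ℝ} (hM : ∀ x, v x ^ 2 ≤ M)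
    (q : Measure ℝ) :
    ∫⁻ x in Ioo a b, ENNReal.ofReal (v x ^ 2) ∂q = ∫⁻ t in Ioo 0 M, q {x | t < v x ^ 2} := by
  rw [lintegral_ofReal_eq_lintegral_Ioo_meas_lt hv.continuous_sq.measurable.aemeasurable
    (fun x => sq_nonneg (v x)) hM]
  refine setLIntegral_congr_fun measurableSet_Ioo fun t ht => ?_
  rw [Measure.restrict_apply' measurableSet_Ioo,
    inter_eq_left.2 (hv.setOf_lt_sq_subset ht.1.le)]

theorem two_mul_lintegral_sqDistrib_le (hv : TestFun a b v) {x₀ : ℝ} (hx₀ : x₀ ∈ Ioo a b)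
    (hmax : ∀ x, v x ^ 2 ≤ v x₀ ^ 2) {f : ℝ → ℝ≥0} (hf : Monotone f) :
    2 * ∫⁻ t in Ioo 0 (v x₀ ^ 2), f (sqDistrib a b v t) ≤
      (∫⁻ x in Ioo a b, ENNReal.ofReal (deriv v x ^ 2)) +
        ∫⁻ t in Ioo 0 (v x₀ ^ 2), ∫⁻ u in Ioo 0 (sqDistrib a b v t), (f u ^ 2 : ℝ≥0) := by
  have hfm : Measurable fun t => f (sqDistrib a b v t) :=
    hf.measurable.comp (antitone_sqDistrib a b v).measurable
  have hamgm : ∀ x, ENNReal.ofReal |2 * v x * deriv v x| * f (sqDistrib a b v (v x ^ 2)) ≤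
      ENNReal.ofReal (deriv v x ^ 2) +
        (f (sqDistrib a b v (v x ^ 2)) ^ 2 : ℝ≥0) * ENNReal.ofReal (v x ^ 2) := fun x => by
    generalize f (sqDistrib a b v (v x ^ 2)) = r
    rw [← ENNReal.ofReal_coe_nnreal, ← ENNReal.ofReal_coe_nnreal,
      ← ENNReal.ofReal_mul (abs_nonneg _), ← ENNReal.ofReal_mul (r ^ 2).coe_nonneg,
      ← ENNReal.ofReal_add (sq_nonneg _) (by positivity)]
    refine ENNReal.ofReal_le_ofReal ?_
    rw [NNReal.coe_pow, abs_mul, abs_mul, abs_two, ← sq_abs (v x), ← sq_abs (deriv v x)]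
    linarith [sq_nonneg (|deriv v x| - r * |v x|)]
  calc 2 * ∫⁻ t in Ioo 0 (v x₀ ^ 2), f (sqDistrib a b v t)
      ≤ ∫⁻ x in Ioo a b, ENNReal.ofReal |2 * v x * deriv v x| *
          f (sqDistrib a b v (v x ^ 2)) :=
        two_mul_setLIntegral_Ioo_le_lintegral_abs_deriv_mul
          (p := fun y => v y ^ 2) hx₀ hv.hasDerivAt_sq
          (by simp [hv.2 a]) (by simp [hv.2 b]) hfm.coe_nnreal_ennreal
    _ ≤ ∫⁻ x in Ioo a b, (ENNReal.ofReal (deriv v x ^ 2) +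
          (f (sqDistrib a b v (v x ^ 2)) ^ 2 : ℝ≥0) * ENNReal.ofReal (v x ^ 2)) :=
        lintegral_mono hamgm
    _ = (∫⁻ x in Ioo a b, ENNReal.ofReal (deriv v x ^ 2)) + ∫⁻ x in Ioo a b,
          (f (sqDistrib a b v (v x ^ 2)) ^ 2 : ℝ≥0) * ENNReal.ofReal (v x ^ 2) :=
        lintegral_add_left ((hv.1.continuous_deriv le_rfl).pow 2).measurable.ennreal_ofReal _
    _ ≤ _ := add_le_add le_rfl <|
        lintegral_comp_measureReal_lt_mul_le hv.continuous_sq.measurable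
          (fun x => sq_nonneg (v x)) hmax fun s t hst => pow_le_pow_left' (hf hst) 2

theorem lintegral_lintegral_sqDistrib_ne_top (hab : a ≤ b) {M : ℝ} {g : ℝ → ℝ≥0}
    (hg : Monotone g) :
    ∫⁻ t in Ioo 0 M, ∫⁻ u in Ioo 0 (sqDistrib a b v t), g u ≠ ∞ := by
  have hG : ∫⁻ u in Ioo 0 (b - a), (g u : ℝ≥0∞) ≠ ∞ :=
    (setLIntegral_lt_top_of_le_nnreal measure_Ioo_lt_top.ne
      ⟨g (b - a), fun u hu => by exact_mod_cast hg hu.2.le⟩).ne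
  refine ((lintegral_mono fun t => lintegral_mono_set
    (Ioo_subset_Ioo_right (sqDistrib_le hab v t))).trans_lt ?_).ne
  rw [setLIntegral_const]
  exact ENNReal.mul_lt_top hG.lt_top measure_Ioo_lt_top

end TestFun

theorem le_lam1_of_forall_isOpen {a b : ℝ} {q : Measure ℝ} {lam : ℝ≥0∞} {f : ℝ → ℝ≥0}
    (hf : Monotone f)
    (h : ∀ U ⊆ Ioo a b, IsOpen U →
      lam * volume U + ∫⁻ u in Ioo 0 (volume.real U), (f u ^ 2 : ℝ≥0) ≤
        2 * f (volume.real U) + q U) :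
    lam ≤ lam1 a b q := by
  refine le_iInf₂ fun v ⟨hv, hv₀⟩ => ?_
  obtain ⟨x₀, hx₀, hmax⟩ := hv.exists_forall_sq_le hv₀
  have hab : a ≤ b := (hx₀.1.trans hx₀.2).le
  set M := v x₀ ^ 2
  rw [dirRQ, ENNReal.le_div_iff_mul_le (.inl hv₀) (.inl hv.lintegral_ofReal_sq_ne_top)]
  set F := ∫⁻ t in Ioo 0 M, ∫⁻ u in Ioo 0 (sqDistrib a b v t), (f u ^ 2 : ℝ≥0)
  have hF : F ≠ ∞ := TestFun.lintegral_lintegral_sqDistrib_ne_top hab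
    fun s t hst => pow_le_pow_left' (hf hst) 2
  have hlevel : ∀ t ∈ Ioo 0 M, lam * volume {x | t < v x ^ 2} +
      ∫⁻ u in Ioo 0 (sqDistrib a b v t), (f u ^ 2 : ℝ≥0) ≤
        2 * f (sqDistrib a b v t) + q {x | t < v x ^ 2} := fun t ht => by
    rw [hv.sqDistrib_eq ht.1.le]
    exact h _ (hv.setOf_lt_sq_subset ht.1.le)
      (isOpen_lt continuous_const hv.continuous_sq)
  have hmeas : ∀ μ : Measure ℝ, Measurable fun t => μ {x | t < v x ^ 2} := fun μ =>
    Antitone.measurable fun s t hst => measure_mono fun x hx => hst.trans_lt hx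
  have hfmeas : Measurable fun t => (f (sqDistrib a b v t) : ℝ≥0∞) :=
    (hf.measurable.comp (antitone_sqDistrib a b v).measurable).coe_nnreal_ennreal
  refine (ENNReal.add_le_add_iff_right hF).1 ?_
  calc lam * (∫⁻ x in Ioo a b, ENNReal.ofReal (v x ^ 2)) + F
      = ∫⁻ t in Ioo 0 M, (lam * volume {x | t < v x ^ 2} +
          ∫⁻ u in Ioo 0 (sqDistrib a b v t), (f u ^ 2 : ℝ≥0)) := by
        rw [hv.lintegral_ofReal_sq_eq hmax, ← lintegral_const_mul _ (hmeas volume),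
          ← lintegral_add_left ((hmeas volume).const_mul lam)]
    _ ≤ ∫⁻ t in Ioo 0 M, (2 * f (sqDistrib a b v t) + q {x | t < v x ^ 2}) :=
        setLIntegral_mono' measurableSet_Ioo hlevel
    _ = 2 * (∫⁻ t in Ioo 0 M, f (sqDistrib a b v t)) +
          ∫⁻ x in Ioo a b, ENNReal.ofReal (v x ^ 2) ∂q := by
        rw [lintegral_add_right _ (hmeas q), lintegral_const_mul _ hfmeas,
          hv.lintegral_ofReal_sq_eq hmax]
    _ ≤ _ := by
        grw [hv.two_mul_lintegral_sqDistrib_le hx₀ hmax hf]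
        exact (add_right_comm _ _ _).le

theorem diam_le_of_forall_sub_le {E : Set ℝ} {C : ℝ} (hC : 0 ≤ C)
    (h : ∀ x ∈ E, ∀ y ∈ E, x < y → y - x ≤ C) : Metric.diam E ≤ C := by
  refine Metric.diam_le_of_forall_dist_le hC fun x hx y hy => ?_
  rw [Real.dist_eq]
  rcases lt_trichotomy x y with hxy | rfl | hxy
  · simpa [abs_of_neg (sub_neg.2 hxy)] using h x hx y hy hxy
  · simpa using hC
  · simpa [abs_of_pos (sub_pos.2 hxy)] using h y hy x hx hxy

theorem setLIntegral_Ioo_le_setLIntegral_of_le_max {a b : ℝ} {U : Set ℝ} {h φ : ℝ → ℝ≥0}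
    (hUm : MeasurableSet U) (hU : U ⊆ Ioo a b) (hh : MonotoneOn h (Ioo 0 (b - a)))
    (hφ : AEMeasurable φ (volume.restrict U))
    (hgap : ∀ x ∈ U, ∀ y ∈ U, x < y → h (y - x) ≤ max (φ x) (φ y)) :
    ∫⁻ u in Ioo 0 (volume.real U), h u ≤ ∫⁻ x in U, φ x := by
  have hUtop : volume U ≠ ∞ := measure_ne_top_of_subset hU measure_Ioo_lt_top.ne
  have hsub : Ioo 0 (volume.real U) ⊆ Ioo 0 (b - a) := fun u hu => by
    have hlt : u < max (b - a) 0 :=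
      (hu.2.trans_le (measureReal_mono hU measure_Ioo_lt_top.ne)).trans_eq Real.volume_real_Ioo
    exact ⟨hu.1, (lt_max_iff.1 hlt).resolve_right hu.1.not_gt⟩
  refine lintegral_coe_le_of_meas_lt_le
    (aemeasurable_restrict_of_monotoneOn measurableSet_Ioo (hh.mono hsub)) hφ fun τ => ?_
  rw [Measure.restrict_apply' measurableSet_Ioo, Measure.restrict_apply' hUm]
  set E := U ∩ {x | φ x ≤ τ}
  have hEb : Bornology.IsBounded E :=
    (Metric.isBounded_Ioo a b).subset (inter_subset_left.trans hU)
  have hE : volume E ≤ ENNReal.ofReal (Metric.diam E) := by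
    rw [Metric.diam, ENNReal.ofReal_toReal hEb.ediam_ne_top]
    exact Real.volume_le_diam E
  have hdiam : {u | τ < h u} ∩ Ioo 0 (volume.real U) ⊆ Ico (Metric.diam E) (volume.real U) := by
    rintro u ⟨hτu, hu⟩
    refine ⟨diam_le_of_forall_sub_le hu.1.le fun x hx y hy hxy => ?_, hu.2⟩
    by_contra! hlt
    have hyx : y - x ∈ Ioo 0 (b - a) := ⟨sub_pos.2 hxy, sub_lt_sub (hU hy.1).2 (hU hx.1).1⟩
    exact hτu.not_ge <| calc h u ≤ h (y - x) := hh (hsub hu) hyx hlt.le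
      _ ≤ max (φ x) (φ y) := hgap x hx.1 y hy.1 hxy
      _ ≤ τ := max_le hx.2 hy.2
  calc volume ({u | τ < h u} ∩ Ioo 0 (volume.real U))
      ≤ volume (Ico (Metric.diam E) (volume.real U)) := measure_mono hdiam
    _ = volume U - ENNReal.ofReal (Metric.diam E) := by
      rw [Real.volume_Ico, ENNReal.ofReal_sub _ Metric.diam_nonneg, ofReal_measureReal hUtop]
    _ ≤ volume U - volume E := tsub_le_tsub_left hE _
    _ ≤ volume ({x | τ < φ x} ∩ U) := by
      rw [tsub_le_iff_left]
      refine (measure_mono fun x hx => ?_).trans (measure_union_le _ _)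
      exact (le_or_gt (φ x) τ).imp (fun hle => ⟨hx, hle⟩) fun hlt => ⟨hlt, hx⟩

theorem tan_half_nonneg {u : ℝ} (hu : u ∈ Ico 0 π) : 0 ≤ tan (u / 2) :=
  tan_nonneg_of_nonneg_of_le_pi_div_two (by linarith [hu.1]) (by linarith [hu.2])

theorem monotoneOn_tan_half_sq : MonotoneOn (fun u => tan (u / 2) ^ 2) (Ico 0 π) :=
  fun u hu w hw huw => pow_le_pow_left₀ (tan_half_nonneg hu)
    (strictMonoOn_tan.monotoneOn ⟨by linarith [hu.1, pi_pos], by linarith [hu.2]⟩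
      ⟨by linarith [hw.1, pi_pos], by linarith [hw.2]⟩ (by linarith)) 2

namespace PsiA

theorem tan_half_sq_le_max (P : PsiA) {x y : ℝ} (hx : x ∈ P.dom) (hy : y ∈ P.dom) (hxy : x < y) :
    tan ((y - x) / 2) ^ 2 ≤ max (P.psi x ^ 2) (P.psi y ^ 2) := by
  have htan : 0 ≤ tan ((y - x) / 2) :=
    tan_half_nonneg ⟨by linarith, by linarith [(P.domSub hx).1, (P.domSub hy).2]⟩
  have hsum : tan ((y - x) / 2) ≤ (P.psi y - P.psi x) / 2 := by linarith [P.gap hx hy hxy]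
  calc tan ((y - x) / 2) ^ 2 ≤ ((P.psi y - P.psi x) / 2) ^ 2 := pow_le_pow_left₀ htan hsum 2
    _ ≤ (P.psi x ^ 2 + P.psi y ^ 2) / 2 := by linarith [sq_nonneg (P.psi x + P.psi y)]
    _ ≤ max (P.psi x ^ 2) (P.psi y ^ 2) := by
      linarith [le_max_left (P.psi x ^ 2) (P.psi y ^ 2), le_max_right (P.psi x ^ 2) (P.psi y ^ 2)]

variable {P : PsiA} {U : Set ℝ}

theorem sqM_eq_top (hUm : MeasurableSet U) (hU : U ⊆ Ioo (-(π / 2)) (π / 2))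
    (hdom : volume (U \ P.dom) ≠ 0) : P.sqM U = ∞ := by
  rw [sqM, Measure.add_apply, Measure.smul_apply, Measure.restrict_apply hUm,
    ← inter_sdiff_assoc, inter_eq_left.2 hU, smul_eq_mul, ENNReal.top_mul hdom, add_top]

theorem lintegral_tan_half_sq_le_sqM (hUm : MeasurableSet U) (hU : U ⊆ P.dom) :
    ∫⁻ u in Ioo 0 (volume.real U), ENNReal.ofReal (tan (u / 2) ^ 2) ≤ P.sqM U := by
  have hmono : MonotoneOn (fun u => (tan (u / 2) ^ 2).toNNReal) (Ioo 0 (π / 2 - -(π / 2))) :=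
    fun u hu w hw huw => Real.toNNReal_mono <|
      monotoneOn_tan_half_sq ⟨hu.1.le, by linarith [hu.2]⟩ ⟨hw.1.le, by linarith [hw.2]⟩ huw
  have hψ : AEMeasurable (fun x => (P.psi x ^ 2).toNNReal) (volume.restrict U) :=
    ((aemeasurable_restrict_of_monotoneOn hUm (P.mono.mono hU)).pow_const 2).real_toNNReal
  calc ∫⁻ u in Ioo 0 (volume.real U), ENNReal.ofReal (tan (u / 2) ^ 2)
      ≤ ∫⁻ x in U, ENNReal.ofReal (P.psi x ^ 2) :=
        setLIntegral_Ioo_le_setLIntegral_of_le_max hUm (hU.trans P.domSub) hmono hψ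
          fun x hx y hy hxy => by
            rw [← Real.toNNReal_monotone.map_max]
            exact Real.toNNReal_mono (P.tan_half_sq_le_max (hU hx) (hU hy) hxy)
    _ = (volume.restrict P.dom).withDensity (fun x => ENNReal.ofReal (P.psi x ^ 2)) U := by
        rw [withDensity_apply _ hUm, Measure.restrict_restrict hUm, inter_eq_left.2 hU]
    _ ≤ P.sqM U := Measure.le_iff'.1 (Measure.le_add_right le_rfl) U

end PsiA

theorem add_setLIntegral_sq_le_of_riccati {f f' w : ℝ → ℝ} {lam r : ℝ} {κ : ℝ≥0}
    (hlam : 0 ≤ lam) (hr : 0 ≤ r) (hf : MonotoneOn f (Icc 0 r)) (hf₀ : 0 ≤ f 0)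
    (hf' : ∀ u ∈ Ioo 0 r, HasDerivAt f (f' u) u) (hw : Measurable w)
    (hric : ∀ u ∈ Ioo 0 r, lam + f u ^ 2 ≤ 2 * f' u + κ * w u) :
    ENNReal.ofReal lam * ENNReal.ofReal r + ∫⁻ u in Ioo 0 r, ENNReal.ofReal (f u ^ 2) ≤
      2 * ENNReal.ofReal (f r) + κ * ∫⁻ u in Ioo 0 r, ENNReal.ofReal (w u) := by
  have hderiv : ∫⁻ u in Ioo 0 r, ENNReal.ofReal (f' u) ≤ ENNReal.ofReal (f r) := by
    rw [lintegral_deriv_eq_volume_image_of_monotoneOn measurableSet_Ioo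
      (fun u hu => (hf' u hu).hasDerivWithinAt) (hf.mono Ioo_subset_Icc_self)]
    calc volume (f '' Ioo 0 r) ≤ volume (Icc (f 0) (f r)) := by
          refine measure_mono (image_subset_iff.2 fun u hu => ?_)
          exact ⟨hf (left_mem_Icc.2 hr) (Ioo_subset_Icc_self hu) hu.1.le,
            hf (Ioo_subset_Icc_self hu) (right_mem_Icc.2 hr) hu.2.le⟩
      _ ≤ ENNReal.ofReal (f r) := by
          rw [Real.volume_Icc]
          exact ENNReal.ofReal_le_ofReal (by linarith)
  calc ENNReal.ofReal lam * ENNReal.ofReal r + ∫⁻ u in Ioo 0 r, ENNReal.ofReal (f u ^ 2)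
      = ∫⁻ u in Ioo 0 r, (ENNReal.ofReal lam + ENNReal.ofReal (f u ^ 2)) := by
        rw [lintegral_add_left measurable_const, setLIntegral_const, Real.volume_Ioo, sub_zero]
    _ ≤ ∫⁻ u in Ioo 0 r, (2 * ENNReal.ofReal (f' u) + κ * ENNReal.ofReal (w u)) := by
        refine setLIntegral_mono' measurableSet_Ioo fun u hu => ?_
        rw [← ENNReal.ofReal_add hlam (sq_nonneg _), ← ENNReal.ofReal_coe_nnreal (p := κ),
          ← ENNReal.ofReal_ofNat 2, ← ENNReal.ofReal_mul κ.coe_nonneg,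
          ← ENNReal.ofReal_mul zero_le_two]
        exact (ENNReal.ofReal_le_ofReal (hric u hu)).trans ENNReal.ofReal_add_le
    _ = 2 * (∫⁻ u in Ioo 0 r, ENNReal.ofReal (f' u)) +
          κ * ∫⁻ u in Ioo 0 r, ENNReal.ofReal (w u) := by
        rw [lintegral_add_right _ (hw.ennreal_ofReal.const_mul _),
          lintegral_const_mul' _ _ ENNReal.ofNat_ne_top,
          lintegral_const_mul' _ _ ENNReal.coe_ne_top]
    _ ≤ 2 * ENNReal.ofReal (f r) + κ * ∫⁻ u in Ioo 0 r, ENNReal.ofReal (w u) := by gcongr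

namespace PsiA

variable {f f' : ℝ → ℝ} {lam : ℝ} {κ : ℝ≥0}

theorem add_setLIntegral_sq_half_le_of_riccati (P : PsiA) {U : Set ℝ} (hUm : MeasurableSet U)
    (hdom : volume (U \ P.dom) = 0) (hlam : 0 ≤ lam)
    (hf : MonotoneOn f (Icc 0 (volume.real P.dom / 2))) (hf₀ : 0 ≤ f 0)
    (hf' : ∀ u ∈ Ioo 0 (volume.real P.dom / 2), HasDerivAt f (f' u) u)
    (hric : ∀ u ∈ Ioo 0 (volume.real P.dom / 2), lam + f u ^ 2 ≤ f' u + κ * tan u ^ 2) :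
    volume.real U ∈ Icc 0 (volume.real P.dom) ∧
      ENNReal.ofReal lam * volume U +
          ∫⁻ u in Ioo 0 (volume.real U), ENNReal.ofReal (f (u / 2) ^ 2) ≤
        2 * ENNReal.ofReal (f (volume.real U / 2)) + κ * P.sqM U := by
  have hdomtop : volume P.dom ≠ ∞ := measure_ne_top_of_subset P.domSub measure_Ioo_lt_top.ne
  have hU : volume (U ∩ P.dom) = volume U := measure_inter_conull' hdom
  have hUdom : volume.real U ≤ volume.real P.dom := by
    rw [measureReal_def, ← hU]
    exact measureReal_mono inter_subset_right hdomtop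
  have hhalf : ∀ {u}, u ≤ volume.real U → u / 2 ≤ volume.real P.dom / 2 := fun hu => by linarith
  have htan : Measurable fun u => tan (u / 2) ^ 2 := by
    simp_rw [tan_eq_sin_div_cos]
    fun_prop
  have hriccati := add_setLIntegral_sq_le_of_riccati (f := fun u => f (u / 2))
    (f' := fun u => f' (u / 2) * (1 / 2)) hlam measureReal_nonneg
    (fun u hu w hw huw => hf ⟨by linarith [hu.1], hhalf hu.2⟩ ⟨by linarith [hw.1], hhalf hw.2⟩
      (by linarith)) (by simpa using hf₀)
    (fun u hu => (hf' (u / 2) ⟨by linarith [hu.1], by linarith [hu.2]⟩).comp u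
      ((hasDerivAt_id u).div_const 2)) htan
    (fun u hu => (hric (u / 2) ⟨by linarith [hu.1], by linarith [hu.2]⟩).trans_eq (by ring))
  have hsqM : ∫⁻ u in Ioo 0 (volume.real U), ENNReal.ofReal (tan (u / 2) ^ 2) ≤ P.sqM U := by
    rw [measureReal_def, ← hU]
    exact (lintegral_tan_half_sq_le_sqM (hUm.inter P.domConn.measurableSet)
      inter_subset_right).trans (measure_mono inter_subset_left)
  rw [ofReal_measureReal (hU ▸ measure_ne_top_of_subset inter_subset_right hdomtop)] at hriccati
  exact ⟨⟨measureReal_nonneg, hUdom⟩, hriccati.trans (by gcongr)⟩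

theorem ofReal_le_lam1_of_riccati (P : PsiA) (hκ : κ ≠ 0) (hlam : 0 ≤ lam)
    (hf : MonotoneOn f (Icc 0 (volume.real P.dom / 2))) (hf₀ : 0 ≤ f 0)
    (hf' : ∀ u ∈ Ioo 0 (volume.real P.dom / 2), HasDerivAt f (f' u) u)
    (hric : ∀ u ∈ Ioo 0 (volume.real P.dom / 2), lam + f u ^ 2 ≤ f' u + κ * tan u ^ 2) :
    ENNReal.ofReal lam ≤ lam1 (-(π / 2)) (π / 2) ((κ : ℝ≥0∞) • P.sqM) := by
  set d := volume.real P.dom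
  have hhalf : ∀ {u}, u ∈ Icc 0 d → u / 2 ∈ Icc 0 (d / 2) := fun hu =>
    ⟨by linarith [hu.1], by linarith [hu.2]⟩
  have hfnn : MonotoneOn (fun u => (f (u / 2)).toNNReal) (Icc 0 d) := fun u hu w hw huw =>
    Real.toNNReal_mono (hf (hhalf hu) (hhalf hw) (by linarith))
  obtain ⟨g, hg, hgf⟩ := hfnn.exists_monotone_extension (OrderBot.bddBelow _)
    (hfnn.map_bddAbove subset_rfl ⟨d, fun u hu => hu.2, right_mem_Icc.2 measureReal_nonneg⟩)
  refine le_lam1_of_forall_isOpen hg fun U hU hUo => ?_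
  rw [Measure.smul_apply, smul_eq_mul]
  by_cases hdom : volume (U \ P.dom) = 0
  · obtain ⟨hr, hriccati⟩ := P.add_setLIntegral_sq_half_le_of_riccati hUo.measurableSet hdom hlam
      hf hf₀ hf' hric
    rw [← hgf hr]
    refine (add_le_add le_rfl (setLIntegral_mono' measurableSet_Ioo fun u hu => ?_)).trans hriccati
    have hu' : u ∈ Icc 0 d := ⟨hu.1.le, hu.2.le.trans hr.2⟩
    have hd : 0 ≤ d := measureReal_nonneg
    have hfu : 0 ≤ f (u / 2) :=
      hf₀.trans (hf ⟨le_rfl, by linarith⟩ (hhalf hu') (hhalf hu').1)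
    rw [← hgf hu', ENNReal.coe_pow, ENNReal.ofReal_pow hfu]
    rfl
  · simp [P.sqM_eq_top hUo.measurableSet hU hdom, ENNReal.mul_top, hκ]

end PsiA

theorem hasDerivAt_tan_one_add_sq {u : ℝ} (hu : cos u ≠ 0) : HasDerivAt tan (1 + tan u ^ 2) u := by
  convert Real.hasDerivAt_tan hu using 1
  rw [← inv_one_add_tan_sq hu, one_div, inv_inv]

theorem PsiA.volume_real_dom_le (P : PsiA) : volume.real P.dom ≤ π := by
  calc volume.real P.dom ≤ volume.real (Ioo (-(π / 2)) (π / 2)) :=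
        measureReal_mono P.domSub measure_Ioo_lt_top.ne
    _ = π := by rw [Real.volume_real_Ioo_of_le (by linarith [pi_pos])]; ring

theorem PsiA.two_mul_sq_le_lam1 (P : PsiA) {c : ℝ} (hc : c ∈ Ioo 0 1) :
    ENNReal.ofReal (2 * c ^ 2) ≤ lam1 (-(π / 2)) (π / 2) ((2 : ℝ≥0∞) • P.sqM) := by
  have hmem : ∀ {u}, u ∈ Icc 0 (volume.real P.dom / 2) → 0 ≤ c * u ∧ c * u < π / 2 := fun hu =>
    ⟨mul_nonneg hc.1.le hu.1, by nlinarith [hu.2, P.volume_real_dom_le, hc.1, hc.2, pi_pos]⟩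
  have hderiv : ∀ u ∈ Ioo 0 (volume.real P.dom / 2), HasDerivAt (fun u => 2 * c * tan (c * u))
      (2 * c * ((1 + tan (c * u) ^ 2) * c)) u := fun u hu => by
    have hcu := hmem (Ioo_subset_Icc_self hu)
    have hcos := (cos_pos_of_mem_Ioo ⟨by linarith [pi_pos], hcu.2⟩).ne'
    simpa using ((hasDerivAt_tan_one_add_sq hcos).comp u
      ((hasDerivAt_id u).const_mul c)).const_mul (2 * c)
  refine P.ofReal_le_lam1_of_riccati (κ := 2) two_ne_zero (by positivity) (fun u hu w hw huw => ?_)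
    (by simp) hderiv fun u hu => ?_
  · have htan : tan (c * u) ≤ tan (c * w) := strictMonoOn_tan.monotoneOn
      ⟨by linarith [(hmem hu).1, pi_pos], (hmem hu).2⟩
      ⟨by linarith [(hmem hw).1, pi_pos], (hmem hw).2⟩ (mul_le_mul_of_nonneg_left huw hc.1.le)
    exact mul_le_mul_of_nonneg_left htan (by linarith [hc.1])
  · have hcu := hmem (Ioo_subset_Icc_self hu)
    have hucu : c * u ≤ u := mul_le_of_le_one_left hu.1.le hc.2.le
    have hu₂ : u < π / 2 := hu.2.trans_le (by linarith [P.volume_real_dom_le])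
    have htan₀ : 0 ≤ tan (c * u) := tan_nonneg_of_nonneg_of_le_pi_div_two hcu.1 hcu.2.le
    have htan : tan (c * u) ≤ tan u := strictMonoOn_tan.monotoneOn
      ⟨by linarith [pi_pos], hcu.2⟩ ⟨by linarith [hu.1, pi_pos], hu₂⟩ hucu
    have hsq : (c * tan (c * u)) ^ 2 ≤ tan u ^ 2 := pow_le_pow_left₀ (mul_nonneg hc.1.le htan₀)
      ((mul_le_of_le_one_left htan₀ hc.2.le).trans htan) 2
    push_cast
    linarith

theorem PsiA.two_le_lam1 (P : PsiA) :
    2 ≤ lam1 (-(π / 2)) (π / 2) ((2 : ℝ≥0∞) • P.sqM) := by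
  have hlim : Tendsto (fun c : ℝ => ENNReal.ofReal (2 * c ^ 2)) (𝓝[<] 1) (𝓝 2) := by
    have hcont : Continuous fun c : ℝ => ENNReal.ofReal (2 * c ^ 2) :=
      ENNReal.continuous_ofReal.comp (by fun_prop)
    simpa using (hcont.tendsto 1).mono_left nhdsWithin_le_nhds
  exact le_of_tendsto hlim <| by
    filter_upwards [Ioo_mem_nhdsLT one_pos] with c hc using P.two_mul_sq_le_lam1 hc

/-- The solution `h` of `h' = 1/4 + 4η(1 + tan²)²`, `h 0 = 1`. With `f = perturbedTan η` one has
`f' + 2 tan² - f² - 2 = η(1 + tan²)²(h' - η(1 + tan²)²h²)`, which is at least `η/4` once `h ≤ 2`. -/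
def tanCorrector (η u : ℝ) : ℝ := 1 + u / 4 + 4 * η * (tan u + tan u ^ 3 / 3)

/-- A perturbation of the solution `f = 2 tan` of `2 + f² = f' + 2 tan²` in the direction
`(1 + tan²)²`, which solves the equation linearized at `2 tan`. -/
def perturbedTan (η u : ℝ) : ℝ := 2 * tan u + η * (1 + tan u ^ 2) ^ 2 * tanCorrector η u

section Perturbation

variable {η u : ℝ}

theorem hasDerivAt_tanCorrector (η : ℝ) (hu : cos u ≠ 0) :
    HasDerivAt (tanCorrector η) (1 / 4 + 4 * η * (1 + tan u ^ 2) ^ 2) u := by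
  have htan := hasDerivAt_tan_one_add_sq hu
  refine ((((hasDerivAt_id u).div_const 4).const_add 1).add
    ((htan.add ((htan.pow 3).div_const 3)).const_mul (4 * η))).congr_deriv ?_
  push_cast
  ring

theorem hasDerivAt_perturbedTan (η : ℝ) (hu : cos u ≠ 0) :
    HasDerivAt (perturbedTan η)
      (2 * (1 + tan u ^ 2) + η * (1 + tan u ^ 2) ^ 2 *
        (4 * tan u * tanCorrector η u + (1 / 4 + 4 * η * (1 + tan u ^ 2) ^ 2))) u := by
  have htan := hasDerivAt_tan_one_add_sq hu
  refine ((htan.const_mul 2).add (((((htan.pow 2).const_add 1).pow 2).const_mul η).mul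
    (hasDerivAt_tanCorrector η hu))).congr_deriv ?_
  simp only [Pi.pow_apply]
  push_cast
  ring

theorem tanCorrector_nonneg (hη : 0 ≤ η) (hu : u ∈ Ico 0 (π / 2)) : 0 ≤ tanCorrector η u := by
  have htan : 0 ≤ tan u := tan_nonneg_of_nonneg_of_le_pi_div_two hu.1 hu.2.le
  have hu₀ : 0 ≤ u := hu.1
  unfold tanCorrector
  positivity

theorem monotoneOn_perturbedTan (hη : 0 ≤ η) : MonotoneOn (perturbedTan η) (Ico 0 (π / 2)) := by
  intro u hu w hw huw
  have htan₀ : 0 ≤ tan u := tan_nonneg_of_nonneg_of_le_pi_div_two hu.1 hu.2.le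
  have htan : tan u ≤ tan w := strictMonoOn_tan.monotoneOn ⟨by linarith [hu.1, pi_pos], hu.2⟩
    ⟨by linarith [hw.1, pi_pos], hw.2⟩ huw
  have hcorr : tanCorrector η u ≤ tanCorrector η w := by
    unfold tanCorrector
    gcongr
  have hcorr₀ := tanCorrector_nonneg hη hu
  unfold perturbedTan
  gcongr

-- `tan u ≤ 1 / cos w` and `π / 8 + 4 / 10 + 4 / 30 < 1`.
theorem tanCorrector_le_two {w : ℝ} (hu : 0 ≤ u) (huw : u ≤ w) (hw : w < π / 2) :
    tanCorrector (cos w ^ 3 / 10) u ≤ 2 := by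
  have hcos : 0 < cos u := cos_pos_of_mem_Ioo ⟨by linarith [pi_pos], huw.trans_lt hw⟩
  have hc : 0 ≤ cos w := cos_nonneg_of_mem_Icc ⟨by linarith [pi_pos], hw.le⟩
  have hcle : cos w ≤ cos u := cos_le_cos_of_nonneg_of_le_pi hu (by linarith [pi_pos]) huw
  have htan₀ : 0 ≤ tan u :=
    tan_nonneg_of_nonneg_of_le_pi_div_two hu (huw.trans hw.le)
  have hctan : cos w * tan u ≤ 1 := calc
    cos w * tan u ≤ cos u * tan u := mul_le_mul_of_nonneg_right hcle htan₀
    _ = sin u := by rw [mul_comm, tan_mul_cos hcos.ne']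
    _ ≤ 1 := sin_le_one u
  have hlin : cos w ^ 2 * (cos w * tan u) ≤ 1 :=
    mul_le_one₀ (pow_le_one₀ hc (cos_le_one w)) (mul_nonneg hc htan₀) hctan
  have hcube : (cos w * tan u) ^ 3 ≤ 1 := pow_le_one₀ (mul_nonneg hc htan₀) hctan
  calc tanCorrector (cos w ^ 3 / 10) u
      = 1 + u / 4 + 4 / 10 * (cos w ^ 2 * (cos w * tan u)) + 4 / 30 * (cos w * tan u) ^ 3 := by
        rw [tanCorrector]; ring
    _ ≤ 2 := by linarith [pi_lt_d2]

theorem add_perturbedTan_sq_le (hη : 0 ≤ η) (hcorr₀ : 0 ≤ tanCorrector η u)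
    (hcorr : tanCorrector η u ≤ 2) :
    2 + η / 4 + perturbedTan η u ^ 2 ≤
      2 * (1 + tan u ^ 2) + η * (1 + tan u ^ 2) ^ 2 *
        (4 * tan u * tanCorrector η u + (1 / 4 + 4 * η * (1 + tan u ^ 2) ^ 2)) +
      2 * tan u ^ 2 := by
  have hsq : tanCorrector η u ^ 2 ≤ 4 := by nlinarith
  have hone : 1 ≤ (1 + tan u ^ 2) ^ 2 := one_le_pow₀ (by linarith [sq_nonneg (tan u)])
  have hquad := mul_le_mul_of_nonneg_left hsq (sq_nonneg (η * (1 + tan u ^ 2) ^ 2))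
  have hlin := mul_le_mul_of_nonneg_left hone hη
  rw [perturbedTan]
  linarith

end Perturbation

theorem PsiA.two_add_cos_cube_le_lam1 (P : PsiA) :
    2 + ENNReal.ofReal (cos (volume.real P.dom / 2) ^ 3 / 40) ≤
      lam1 (-(π / 2)) (π / 2) ((2 : ℝ≥0∞) • P.sqM) := by
  have hle : volume.real P.dom / 2 ≤ π / 2 := by linarith [P.volume_real_dom_le]
  set w := volume.real P.dom / 2
  rcases hle.eq_or_lt with hw | hw
  · simpa [hw] using P.two_le_lam1
  have hcos : ∀ u ∈ Ioo 0 w, cos u ≠ 0 := fun u hu =>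
    (cos_pos_of_mem_Ioo ⟨by linarith [hu.1, pi_pos], hu.2.trans hw⟩).ne'
  have hw₀ : 0 ≤ w := by positivity
  have hη : 0 ≤ cos w ^ 3 / 10 := by
    have hc : 0 ≤ cos w := cos_nonneg_of_mem_Icc ⟨by linarith [pi_pos], hw.le⟩
    positivity
  have hsub : Icc 0 w ⊆ Ico 0 (π / 2) := fun u hu => ⟨hu.1, hu.2.trans_lt hw⟩
  have hlam : (2 : ℝ≥0∞) + ENNReal.ofReal (cos w ^ 3 / 40) =
      ENNReal.ofReal (2 + cos w ^ 3 / 10 / 4) := by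
    rw [ENNReal.ofReal_add zero_le_two (by positivity), ENNReal.ofReal_ofNat]
    ring_nf
  rw [hlam]
  refine P.ofReal_le_lam1_of_riccati (κ := 2) two_ne_zero (by positivity)
    ((monotoneOn_perturbedTan hη).mono hsub) ?_
    (fun u hu => hasDerivAt_perturbedTan (cos w ^ 3 / 10) (hcos u hu)) fun u hu => ?_
  · simpa [perturbedTan, tanCorrector] using hη
  · exact add_perturbedTan_sq_le hη
      (tanCorrector_nonneg hη (hsub (Ioo_subset_Icc_self hu)))
      (tanCorrector_le_two hu.1.le hu.2.le hw)

theorem refined_lower_bound_two_psi_sq_general :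
    ∃ C : ℝ, 0 < C ∧ ∀ P : PsiA,
      2 + ENNReal.ofReal (C * (π - volume.real P.dom) ^ 3) ≤
        lam1 (-(π / 2)) (π / 2) ((2 : ℝ≥0∞) • P.sqM) := by
  refine ⟨1 / (40 * π ^ 3), by positivity, fun P => le_trans ?_ P.two_add_cos_cube_le_lam1⟩
  set d := volume.real P.dom
  have hcos : (π - d) / π ≤ cos (d / 2) := calc
    (π - d) / π = 1 - 2 / π * (d / 2) := by field_simp
    _ ≤ cos (d / 2) := one_sub_mul_le_cos (by positivity) (by linarith [P.volume_real_dom_le])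
  have hcube : 1 / (40 * π ^ 3) * (π - d) ^ 3 ≤ cos (d / 2) ^ 3 / 40 := calc
    1 / (40 * π ^ 3) * (π - d) ^ 3 = ((π - d) / π) ^ 3 / 40 := by field_simp
    _ ≤ cos (d / 2) ^ 3 / 40 := by
      gcongr
      exact div_nonneg (sub_nonneg.2 P.volume_real_dom_le) pi_pos.le
  gcongr

/-- Proposition 2.9 / `p:quarta`: there exists an absolute constant `C > 0`
such that, for any `ψ ∈ 𝒜(I_π)` with finiteness domain `I_d = (-d/2, d/2)` (`d ≤ π`),
it holds `λ₁(I_d, 2ψ²) ≥ 2 + C (π - d)³`. -/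
theorem refined_lower_bound_two_psi_sq :
    ∃ C : ℝ, 0 < C ∧
      ∀ d : ℝ, 0 < d → d ≤ π →
        ∀ P : PsiA, P.dom = Ioo (-(d / 2)) (d / 2) →
          2 + ENNReal.ofReal (C * (π - d) ^ 3) ≤
            lam1 (-(π / 2)) (π / 2) ((2 : ℝ≥0∞) • P.sqM) := by
  obtain ⟨C, hC, hbound⟩ := refined_lower_bound_two_psi_sq_general
  refine ⟨C, hC, fun d hd _ P hdom => ?_⟩
  simpa [hdom, Real.volume_real_Ioo_of_le, hd.le] using hbound P
end
end

section
/- There exists an absolute constant K > 0 such that the following holds. Let ψ ∈ 𝒜(I_π) be of the form ψ = f + g/2, where f ∈ 𝒜(I_π) with dom(f) = I_d ⊆ I_π, and g = −(log h)' on I_d for some (1/m)-concave function h which is affine on an interval [a,b] with I_{π/4} ⊆ [a,b] ⊆ I_d. If λ₁(I_d, 2ψ') ≤ 15, then λ₁(I_d, 2ψ') ≥ 4 + (16K/(mπ²)) · [1 − min{h(a),h(b)}/max{h(a),h(b)}]². -/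
open MeasureTheory Real Set Filter
open scoped ENNReal

noncomputable section

/-!
Two estimates for a `C¹` function `u` vanishing off `I_d` are averaged.

The gap condition on `f` alone gives `4 ∫ u² ≤ ∫ u'² + 2 ∫ u² df`. For piecewise affine `u ≥ 0`
this is an induction on superlevel intervals. Below the lowest point between its first and last
break points, `u` is a trapezoid, whose superlevel sets are intervals of length affine in the level;
the layer cake formula and the gap condition bound `∫ u² df` below by an explicit integral of
`2 tan (length / 2)`. Above that point the superlevel interval is cut in two, which costs nothing
because `tan` is superadditive on `[0, π/2)`.

The Dirichlet eigenvalue `(16/7)²` of `(π/16, π/2)` exceeds `5`. Hence, by a Riccati argument,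
`5 ∫ u² ≤ ∫ u'² + A ∫_{|x| < π/16} u²`: on either side of the centre `5 ∫ u² ≤ ∫ u'²` up to a
multiple of `u(±π/16)²`, which the energy at the centre absorbs.

Since `h` is affine on `[a, b]`, with slope at least `(max h - min h) / π` in absolute value,
`-(log h)'' = (h'/h)²` is at least `(1 - r)² / π²` near the centre, where `r = min h / max h` over
the end points. So `ψ'` exceeds `f'` there by a multiple of the Lebesgue measure, which pays for
the term with `A` once the second estimate is given a weight proportional to `(1 - r)²`.
-/

lemma tan_add_tan_le_tan_add {x y : ℝ} (hx : 0 ≤ x) (hy : 0 ≤ y) (hxy : x + y < π / 2) :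
    tan x + tan y ≤ tan (x + y) := by
  have hcos_x : 0 < cos x := cos_pos_of_mem_Ioo ⟨by linarith, by linarith⟩
  have hcos_y : 0 < cos y := cos_pos_of_mem_Ioo ⟨by linarith, by linarith⟩
  have hcos : 0 < cos (x + y) := cos_pos_of_mem_Ioo ⟨by linarith, by linarith⟩
  have hsin_x : 0 ≤ sin x := sin_nonneg_of_nonneg_of_le_pi hx (by linarith)
  have hsin_y : 0 ≤ sin y := sin_nonneg_of_nonneg_of_le_pi hy (by linarith)
  have hsin : 0 ≤ sin (x + y) := sin_nonneg_of_nonneg_of_le_pi (by linarith) (by linarith)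
  calc tan x + tan y = sin (x + y) / (cos x * cos y) := by
        rw [tan_eq_sin_div_cos, tan_eq_sin_div_cos, sin_add]
        field_simp
    _ ≤ sin (x + y) / cos (x + y) := by
        gcongr
        rw [cos_add]
        nlinarith [mul_nonneg hsin_x hsin_y]
    _ = tan (x + y) := (tan_eq_sin_div_cos _).symm

/-- The improved monotonicity of the class `𝒜(I_π)`, expressed through the derivative measure:
`μ (x, y] ≥ 2 tan ((y - x) / 2)` for all `x ≤ y` in `s`. -/
def HasTanGap (μ : Measure ℝ) (s : Set ℝ) : Prop :=
  ∀ x ∈ s, ∀ y ∈ s, x ≤ y → ENNReal.ofReal (2 * tan ((y - x) / 2)) ≤ μ (Ioc x y)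

lemma HasTanGap.mono {μ : Measure ℝ} {s t : Set ℝ} (hμ : HasTanGap μ t) (hst : s ⊆ t) :
    HasTanGap μ s :=
  fun x hx y hy hxy ↦ hμ x (hst hx) y (hst hy) hxy

lemma HasTanGap.le_measureReal {μ : Measure ℝ} [IsFiniteMeasure μ] {s : Set ℝ}
    (hμ : HasTanGap μ s) {x y : ℝ} (hx : x ∈ s) (hy : y ∈ s) (hxy : x ≤ y) :
    2 * tan ((y - x) / 2) ≤ μ.real (Ioc x y) :=
  (ENNReal.ofReal_le_iff_le_toReal (measure_ne_top _ _)).1 (hμ x hx y hy hxy)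

lemma HasTanGap.restrict_Ioc {μ : Measure ℝ} {α β : ℝ} (hμ : HasTanGap μ (Icc α β)) :
    HasTanGap (μ.restrict (Ioc α β)) (Icc α β) := by
  intro x hx y hy hxy
  rw [Measure.restrict_apply measurableSet_Ioc,
    inter_eq_left.2 (Ioc_subset_Ioc hx.1 hy.2)]
  exact hμ x hx y hy hxy

/-- The energy `∫ v'² - 4 ∫ v² + 2 ∫ (v² - γ²) dμ` of the part of `v` above the level `γ` over
`[α, β]`, normalized by `8 tan ((β - α) / 2) γ²` so that it vanishes for `v = cos²` and
`dμ = sec² dx` on the symmetric interval where `cos² ≥ γ`. -/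
def levelEnergy (μ : Measure ℝ) (v : ℝ → ℝ) (γ α β : ℝ) : ℝ :=
  (∫ x in α..β, deriv v x ^ 2) - 4 * (∫ x in α..β, v x ^ 2) +
    2 * (∫ x in α..β, (v x ^ 2 - γ ^ 2) ∂μ) + 8 * tan ((β - α) / 2) * γ ^ 2

lemma intervalIntegrable_deriv_sq {C : NNReal} {v : ℝ → ℝ} (hv : LipschitzWith C v)
    (α β : ℝ) : IntervalIntegrable (fun x ↦ deriv v x ^ 2) volume α β := by
  refine (intervalIntegrable_const (c := (C : ℝ) ^ 2)).mono_fun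
    ((measurable_deriv v).pow_const 2).aestronglyMeasurable (.of_forall fun x ↦ ?_)
  have hbound : ‖deriv v x‖ ≤ C := norm_deriv_le_of_lipschitz hv
  simp only [norm_pow]
  gcongr
  simpa using hbound

lemma levelEnergy_add_le {μ : Measure ℝ} [IsLocallyFiniteMeasure μ] {C : NNReal} {v : ℝ → ℝ}
    (hv : LipschitzWith C v) {γ α c β : ℝ} (hαc : α ≤ c) (hcβ : c ≤ β) (hπ : β - α < π) :
    levelEnergy μ v γ α c + levelEnergy μ v γ c β ≤ levelEnergy μ v γ α β := by
  have hcont : Continuous v := hv.continuous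
  have hderiv := intervalIntegral.integral_add_adjacent_intervals
    (intervalIntegrable_deriv_sq hv α c) (intervalIntegrable_deriv_sq hv c β)
  have hmass := intervalIntegral.integral_add_adjacent_intervals (μ := volume)
    ((hcont.pow 2).intervalIntegrable α c) ((hcont.pow 2).intervalIntegrable c β)
  have hpot := intervalIntegral.integral_add_adjacent_intervals (μ := μ)
    (((hcont.pow 2).sub (continuous_const (y := γ ^ 2))).intervalIntegrable α c)
    (((hcont.pow 2).sub continuous_const).intervalIntegrable c β)
  have htan := tan_add_tan_le_tan_add (x := (c - α) / 2) (y := (β - c) / 2)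
    (by linarith) (by linarith) (by linarith)
  rw [show (c - α) / 2 + (β - c) / 2 = (β - α) / 2 by ring] at htan
  have htan_sq := mul_le_mul_of_nonneg_right htan (sq_nonneg γ)
  simp only [Pi.pow_apply, Pi.sub_apply] at hmass hpot
  unfold levelEnergy
  linarith

lemma hasDerivAt_level_primitive {r L s : ℝ} (hcos : cos ((L - r * s) / 2) ≠ 0) :
    HasDerivAt (fun s ↦ 8 * tan ((L - r * s) / 2) * s ^ 2 - 4 * s / r + 4 * r * s ^ 3 / 3)
      (8 * tan ((L - r * s) / 2) * (2 * s)
        - 4 * r * s ^ 2 / cos ((L - r * s) / 2) ^ 2 - 4 / r + 4 * r * s ^ 2) s := by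
  have hangle : HasDerivAt (fun s : ℝ ↦ (L - r * s) / 2) (-r / 2) s := by
    simpa using (((hasDerivAt_id s).const_mul r).const_sub L).div_const 2
  have hid := hasDerivAt_id s
  have htan := (hasDerivAt_tan hcos).comp s hangle
  refine ((((htan.const_mul 8).mul (hid.pow 2)).sub ((hid.const_mul 4).div_const r)).add
    (((hid.pow 3).const_mul (4 * r)).div_const 3)).congr_deriv ?_
  simp only [Function.comp_apply, Pi.pow_apply, id_eq]
  norm_num
  ring

lemma level_primitive_sub_le_integral {γ γ' r L : ℝ} (hr : 0 < r) (hγγ' : γ ≤ γ')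
    (hL : L - r * γ < π) (hL' : 0 ≤ L - r * γ') :
    8 * tan ((L - r * γ') / 2) * γ' ^ 2 - 4 * γ' / r + 4 * r * γ' ^ 3 / 3 -
        (8 * tan ((L - r * γ) / 2) * γ ^ 2 - 4 * γ / r + 4 * r * γ ^ 3 / 3) ≤
      ∫ s in γ..γ', 4 * tan ((L - r * s) / 2) * (2 * s) := by
  have hcos : ∀ s ∈ Icc γ γ', cos ((L - r * s) / 2) ≠ 0 := by
    intro s hs
    have hlower : r * γ ≤ r * s := by gcongr; exact hs.1
    have hupper : r * s ≤ r * γ' := by gcongr; exact hs.2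
    exact (cos_pos_of_mem_Ioo ⟨by linarith [pi_pos], by linarith⟩).ne'
  have hderiv := fun s hs ↦ hasDerivAt_level_primitive (hcos s hs)
  have htan : ContinuousOn (fun s ↦ tan ((L - r * s) / 2)) (Icc γ γ') :=
    continuousOn_tan.comp (by fun_prop) hcos
  refine intervalIntegral.sub_le_integral_of_hasDeriv_right_of_le hγγ'
    (fun s hs ↦ (hderiv s hs).continuousAt.continuousWithinAt)
    (fun s hs ↦ (hderiv s (Ioo_subset_Icc_self hs)).hasDerivWithinAt)
    (ContinuousOn.integrableOn_Icc (by fun_prop)) fun s hs ↦ ?_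
  have hcos_s := hcos s (Ioo_subset_Icc_self hs)
  have hsec : 1 / cos ((L - r * s) / 2) ^ 2 = 1 + tan ((L - r * s) / 2) ^ 2 := by
    rw [one_div, inv_eq_iff_eq_inv, inv_one_add_tan_sq hcos_s]
  set T := tan ((L - r * s) / 2)
  have hsquare : 0 ≤ 4 / r * (1 - r * s * T) ^ 2 := by positivity
  calc 8 * T * (2 * s) - 4 * r * s ^ 2 / cos ((L - r * s) / 2) ^ 2 - 4 / r + 4 * r * s ^ 2
      = 8 * T * (2 * s) - 4 * r * s ^ 2 * (1 + T ^ 2) - 4 / r + 4 * r * s ^ 2 := by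
        rw [← hsec]; ring
    _ = 4 * T * (2 * s) - 4 / r * (1 - r * s * T) ^ 2 := by field_simp; ring
    _ ≤ 4 * T * (2 * s) := sub_le_self _ hsquare

lemma integral_sq_eq_integral_measureReal_le {Ω : Type*} [MeasurableSpace Ω] {μ : Measure Ω}
    [IsFiniteMeasure μ] {f : Ω → ℝ} {M : ℝ} (hf : AEMeasurable f μ) (hM : 0 ≤ M)
    (hf_nonneg : 0 ≤ᵐ[μ] f) (hfM : ∀ᵐ x ∂μ, f x ≤ M) :
    ∫ x, f x ^ 2 ∂μ = ∫ s in 0..M, μ.real {x | s ≤ f x} * (2 * s) := by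
  have hmeas : Antitone fun s ↦ μ.real {x | s ≤ f x} := fun s t hst ↦
    measureReal_mono fun x hx ↦ hst.trans hx
  have hprim : ∀ y : ℝ, ∫ s in (0 : ℝ)..y, 2 * s = y ^ 2 := fun y ↦ by
    rw [intervalIntegral.integral_const_mul, integral_id]; ring
  have hlayer := lintegral_comp_eq_lintegral_meas_le_mul μ hf_nonneg hf
    (g := fun s ↦ 2 * s) (fun t _ ↦ Continuous.intervalIntegrable (by fun_prop) _ _)
    (by filter_upwards [ae_restrict_mem measurableSet_Ioi] with s hs
        have := hs.out; positivity)
  have hvanish : ∀ s, M < s → μ {x | s ≤ f x} = 0 := fun s hs ↦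
    measure_mono_null (fun x (hx : s ≤ f x) ↦ not_le.2 (hs.trans_le hx)) hfM
  simp only [hprim] at hlayer
  rw [integral_eq_lintegral_of_nonneg_ae (.of_forall fun x ↦ sq_nonneg _)
      (hf.pow_const 2).aestronglyMeasurable, hlayer, intervalIntegral.integral_of_le hM,
    integral_eq_lintegral_of_nonneg_ae, ← Ioc_union_Ioi_eq_Ioi hM,
    lintegral_union measurableSet_Ioi (Ioc_disjoint_Ioi le_rfl)]
  · rw [setLIntegral_congr_fun (g := 0) measurableSet_Ioi
      fun s (hs : M < s) ↦ by simp [hvanish s hs]]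
    simp only [Pi.zero_apply, lintegral_zero, add_zero]
    congr 1
    refine setLIntegral_congr_fun measurableSet_Ioc fun s _ ↦ ?_
    rw [ENNReal.ofReal_mul measureReal_nonneg, ofReal_measureReal]
  · filter_upwards [ae_restrict_mem measurableSet_Ioc] with s hs
    have := hs.1
    positivity
  · exact (hmeas.measurable.mul (by fun_prop)).aestronglyMeasurable

lemma integral_mul_le_integral_sq_sub_sq {Ω : Type*} [MeasurableSpace Ω] {μ : Measure Ω}
    [IsFiniteMeasure μ] {f : Ω → ℝ} {φ : ℝ → ℝ} {γ γ' : ℝ} (hf : AEMeasurable f μ) (hγ : 0 ≤ γ)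
    (hγγ' : γ ≤ γ') (hγf : ∀ᵐ x ∂μ, γ ≤ f x) (hfγ' : ∀ᵐ x ∂μ, f x ≤ γ')
    (hφ : ContinuousOn φ (Icc γ γ')) (hφμ : ∀ s ∈ Icc γ γ', φ s ≤ μ.real {x | s ≤ f x}) :
    ∫ s in γ..γ', φ s * (2 * s) ≤ ∫ x, (f x ^ 2 - γ ^ 2) ∂μ := by
  have hmeas : Antitone fun s ↦ μ.real {x | s ≤ f x} := fun s t hst ↦
    measureReal_mono fun x hx ↦ hst.trans hx
  have hlayer_int : ∀ s t, IntervalIntegrable (fun s ↦ μ.real {x | s ≤ f x} * (2 * s))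
      volume s t := fun s t ↦
    hmeas.intervalIntegrable.mul_continuousOn (by fun_prop)
  have hbelow : ∫ s in 0..γ, μ.real {x | s ≤ f x} * (2 * s) = μ.real univ * γ ^ 2 := by
    have hfull : ∀ s ∈ uIcc 0 γ, μ.real {x | s ≤ f x} * (2 * s) = μ.real univ * (2 * s) := by
      intro s hs
      rw [uIcc_of_le hγ] at hs
      rw [measureReal_congr (eventuallyEq_univ.2 (hγf.mono fun x hx ↦ hs.2.trans hx))]
    rw [intervalIntegral.integral_congr hfull, intervalIntegral.integral_const_mul,
      intervalIntegral.integral_const_mul, integral_id]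
    ring
  have hsq_int : Integrable (fun x ↦ f x ^ 2) μ := by
    refine Integrable.of_bound (C := γ' ^ 2) (hf.pow_const 2).aestronglyMeasurable ?_
    filter_upwards [hγf, hfγ'] with x hlow hup
    rw [Real.norm_of_nonneg (sq_nonneg _)]
    exact pow_le_pow_left₀ (hγ.trans hlow) hup 2
  rw [integral_sub hsq_int (integrable_const _), integral_const, smul_eq_mul,
    integral_sq_eq_integral_measureReal_le hf (hγ.trans hγγ')
      (hγf.mono fun x hx ↦ hγ.trans hx) hfγ',
    ← intervalIntegral.integral_add_adjacent_intervals (hlayer_int 0 γ) (hlayer_int γ γ'),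
    hbelow, add_sub_cancel_left]
  refine intervalIntegral.integral_mono_on hγγ' ?_ (hlayer_int γ γ') fun s hs ↦ ?_
  · exact (ContinuousOn.mul hφ (by fun_prop)).intervalIntegrable_of_Icc hγγ'
  · have := hγ.trans hs.1
    gcongr
    exact hφμ s hs

/-- The restriction of `v` to `s` is an affine function. -/
def IsAffineOn (v : ℝ → ℝ) (s : Set ℝ) : Prop :=
  ∃ k c : ℝ, ∀ x ∈ s, v x = k * x + c

namespace IsAffineOn

variable {v : ℝ → ℝ} {s t : Set ℝ} {p q x : ℝ}

lemma mono (hv : IsAffineOn v t) (hst : s ⊆ t) : IsAffineOn v s :=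
  let ⟨k, c, hkc⟩ := hv
  ⟨k, c, fun x hx ↦ hkc x (hst hx)⟩

lemma eq_interpolation (hv : IsAffineOn v (Icc p q)) (hpq : p < q) (hx : x ∈ Icc p q) :
    v x = v p + (v q - v p) / (q - p) * (x - p) := by
  obtain ⟨k, c, hkc⟩ := hv
  rw [hkc x hx, hkc p (left_mem_Icc.2 hpq.le), hkc q (right_mem_Icc.2 hpq.le)]
  field_simp [(sub_pos.2 hpq).ne']
  ring

lemma integral_deriv_sq (hv : IsAffineOn v (Icc p q)) (hpq : p < q) :
    ∫ x in p..q, deriv v x ^ 2 = (v q - v p) ^ 2 / (q - p) := by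
  obtain ⟨k, c, hkc⟩ := hv
  have hderiv : ∀ x ∈ Ioo p q, deriv v x ^ 2 = k ^ 2 := by
    intro x hx
    have hloc : v =ᶠ[nhds x] fun y ↦ k * y + c :=
      eventually_of_mem (Icc_mem_nhds hx.1 hx.2) hkc
    rw [hloc.deriv_eq]
    simp
  rw [intervalIntegral.integral_of_le hpq.le, integral_Ioc_eq_integral_Ioo,
    setIntegral_congr_fun measurableSet_Ioo hderiv, hkc p (left_mem_Icc.2 hpq.le),
    hkc q (right_mem_Icc.2 hpq.le)]
  simp only [setIntegral_const, volume_real_Ioo_of_le hpq.le, smul_eq_mul]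
  field_simp [(sub_pos.2 hpq).ne']
  ring

lemma integral_sq (hv : IsAffineOn v (Icc p q)) (hpq : p ≤ q) :
    ∫ x in p..q, v x ^ 2 = (q - p) * (v p ^ 2 + v p * v q + v q ^ 2) / 3 := by
  obtain ⟨k, c, hkc⟩ := hv
  have hprim : ∀ x ∈ uIcc p q,
      HasDerivAt (fun x ↦ k ^ 2 * x ^ 3 / 3 + k * c * x ^ 2 + c ^ 2 * x) (v x ^ 2) x := by
    intro x hx
    rw [uIcc_of_le hpq] at hx
    have hid := hasDerivAt_id x
    refine (((((hid.pow 3).const_mul (k ^ 2)).div_const 3).add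
      ((hid.pow 2).const_mul (k * c))).add (hid.const_mul (c ^ 2))).congr_deriv ?_
    simp only [hkc x hx, id_eq]
    norm_num
    ring
  have hcont : ContinuousOn (fun x ↦ v x ^ 2) (uIcc p q) := by
    rw [uIcc_of_le hpq]
    exact ContinuousOn.congr (f := fun x ↦ (k * x + c) ^ 2) (by fun_prop)
      fun x hx ↦ by simp only [hkc x hx]
  rw [intervalIntegral.integral_eq_sub_of_hasDerivAt hprim hcont.intervalIntegrable,
    hkc p (left_mem_Icc.2 hpq), hkc q (right_mem_Icc.2 hpq)]
  ring

end IsAffineOn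

/-- Over `[α, β]` the graph of `v` is at height `γ` at both ends, rises linearly to `γ'` over
`[α, α']` and over `[β', β]` (seen from `β`), and stays above `γ'` in between. -/
structure IsTrapezoid (v : ℝ → ℝ) (γ γ' α α' β' β : ℝ) : Prop where
  level_lt : γ < γ'
  left_lt : α < α'
  mid_le : α' ≤ β'
  right_lt : β' < β
  affine_left : IsAffineOn v (Icc α α')
  affine_right : IsAffineOn v (Icc β' β)
  apply_left : v α = γ
  apply_left' : v α' = γ'
  apply_right' : v β' = γ'
  apply_right : v β = γ
  le_mid : ∀ x ∈ Icc α' β', γ' ≤ v x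

namespace IsTrapezoid

variable {v : ℝ → ℝ} {γ γ' α α' β' β : ℝ}

/-- The inverse slopes of the two flanks added up: the superlevel set `{v ≥ s}` has length
`β - α - width * (s - γ)`. -/
def width (_ : IsTrapezoid v γ γ' α α' β' β) : ℝ :=
  (α' - α) / (γ' - γ) + (β - β') / (γ' - γ)

lemma width_pos (hv : IsTrapezoid v γ γ' α α' β' β) : 0 < hv.width :=
  add_pos (div_pos (sub_pos.2 hv.left_lt) (sub_pos.2 hv.level_lt))
    (div_pos (sub_pos.2 hv.right_lt) (sub_pos.2 hv.level_lt))

lemma width_mul (hv : IsTrapezoid v γ γ' α α' β' β) :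
    hv.width * (γ' - γ) = (α' - α) + (β - β') := by
  have := (sub_pos.2 hv.level_lt).ne'
  rw [width]
  field_simp

lemma le_apply (hv : IsTrapezoid v γ γ' α α' β' β) {s x : ℝ} (hs : s ∈ Icc γ γ')
    (hx : x ∈ Icc (α + (α' - α) / (γ' - γ) * (s - γ)) (β - (β - β') / (γ' - γ) * (s - γ))) :
    s ≤ v x := by
  have hlevel := sub_pos.2 hv.level_lt
  have hleft := sub_pos.2 hv.left_lt
  have hright := sub_pos.2 hv.right_lt
  have hs_nonneg : 0 ≤ s - γ := sub_nonneg.2 hs.1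
  have hαx : α ≤ x := le_trans (le_add_of_nonneg_right (by positivity)) hx.1
  have hxβ : x ≤ β := hx.2.trans (sub_le_self _ (by positivity))
  rcases le_total x α' with hxα' | hα'x
  · rw [hv.affine_left.eq_interpolation hv.left_lt ⟨hαx, hxα'⟩, hv.apply_left, hv.apply_left']
    have hscaled : (α' - α) / (γ' - γ) * (s - γ) ≤ x - α := by linarith [hx.1]
    rw [div_mul_eq_mul_div, div_le_iff₀ hlevel] at hscaled
    rw [← sub_le_iff_le_add', div_mul_eq_mul_div, le_div_iff₀ hleft]
    linarith
  rcases le_total x β' with hxβ' | hβ'x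
  · exact hs.2.trans (hv.le_mid x ⟨hα'x, hxβ'⟩)
  · rw [hv.affine_right.eq_interpolation hv.right_lt ⟨hβ'x, hxβ⟩, hv.apply_right,
      hv.apply_right']
    have hscaled : (β - β') / (γ' - γ) * (s - γ) ≤ β - x := by linarith [hx.2]
    rw [div_mul_eq_mul_div, div_le_iff₀ hlevel] at hscaled
    rw [← sub_le_iff_le_add', ← sub_nonneg]
    have hgap : (γ - γ') / (β - β') * (x - β') - (s - γ') =
        ((β - x) * (γ' - γ) - (β - β') * (s - γ)) / (β - β') := by
      field_simp
      ring
    rw [hgap]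
    exact div_nonneg (sub_nonneg.2 hscaled) hright.le

lemma level_le_apply (hv : IsTrapezoid v γ γ' α α' β' β) {x : ℝ} (hx : x ∈ Icc α β) : γ ≤ v x :=
  hv.le_apply (left_mem_Icc.2 hv.level_lt.le) (by simpa using hx)

lemma integral_left_add_right_le (hv : IsTrapezoid v γ γ' α α' β' β) :
    4 * (γ' - γ) / hv.width ≤
      (∫ x in α..α', deriv v x ^ 2) + ∫ x in β'..β, deriv v x ^ 2 := by
  have hlevel := sub_pos.2 hv.level_lt
  have hleft := sub_pos.2 hv.left_lt
  have hright := sub_pos.2 hv.right_lt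
  rw [hv.affine_left.integral_deriv_sq hv.left_lt, hv.affine_right.integral_deriv_sq hv.right_lt,
    hv.apply_left, hv.apply_left', hv.apply_right, hv.apply_right', ← sub_nonneg]
  have hsquare : (γ' - γ) ^ 2 / (α' - α) + (γ - γ') ^ 2 / (β - β') - 4 * (γ' - γ) / hv.width =
      (γ' - γ) ^ 2 * ((α' - α) - (β - β')) ^ 2 /
        ((α' - α) * (β - β') * ((α' - α) + (β - β'))) := by
    rw [width]
    field_simp
    ring
  rw [hsquare]
  positivity

lemma integral_sq_left_add_right (hv : IsTrapezoid v γ γ' α α' β' β) :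
    (∫ x in α..α', v x ^ 2) + ∫ x in β'..β, v x ^ 2 = hv.width * (γ' ^ 3 - γ ^ 3) / 3 := by
  rw [hv.affine_left.integral_sq hv.left_lt.le, hv.affine_right.integral_sq hv.right_lt.le,
    hv.apply_left, hv.apply_left', hv.apply_right, hv.apply_right']
  linear_combination (-(γ ^ 2 + γ * γ' + γ' ^ 2) / 3) * hv.width_mul

variable {μ : Measure ℝ} [IsFiniteMeasure μ]

lemma two_mul_tan_le_measureReal (hv : IsTrapezoid v γ γ' α α' β' β)
    (hμ : HasTanGap μ (Icc α β)) {s : ℝ} (hs : s ∈ Icc γ γ') :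
    2 * tan ((β - α - hv.width * (s - γ)) / 2) ≤
      (μ.restrict (Ioc α β)).real {x | s ≤ min (v x) γ'} := by
  have hlevel := sub_pos.2 hv.level_lt
  have hleft := sub_pos.2 hv.left_lt
  have hright := sub_pos.2 hv.right_lt
  set p := α + (α' - α) / (γ' - γ) * (s - γ) with hp
  set q := β - (β - β') / (γ' - γ) * (s - γ) with hq
  have hαp : α ≤ p := le_add_of_nonneg_right (mul_nonneg (by positivity) (sub_nonneg.2 hs.1))
  have hqβ : q ≤ β := sub_le_self _ (mul_nonneg (by positivity) (sub_nonneg.2 hs.1))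
  have hqp : q - p = β - α - hv.width * (s - γ) := by rw [hp, hq, width]; ring
  have hpq : p ≤ q := by
    have : hv.width * (s - γ) ≤ hv.width * (γ' - γ) :=
      mul_le_mul_of_nonneg_left (by linarith [hs.2]) hv.width_pos.le
    linarith [hv.width_mul, hv.mid_le]
  calc 2 * tan ((β - α - hv.width * (s - γ)) / 2) ≤ μ.real (Ioc p q) := by
        rw [← hqp]
        exact hμ.le_measureReal ⟨hαp, hpq.trans hqβ⟩ ⟨hαp.trans hpq, hqβ⟩ hpq
    _ = (μ.restrict (Ioc α β)).real (Ioc p q) := by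
        rw [measureReal_restrict_apply measurableSet_Ioc,
          inter_eq_left.2 (Ioc_subset_Ioc hαp hqβ)]
    _ ≤ (μ.restrict (Ioc α β)).real {x | s ≤ min (v x) γ'} :=
        measureReal_mono fun x hx ↦ le_min (hv.le_apply hs (Ioc_subset_Icc_self hx)) hs.2

lemma integral_tan_le (hv : IsTrapezoid v γ γ' α α' β' β) (hcont : Continuous v) (hγ : 0 ≤ γ)
    (hπ : β - α < π) (hμ : HasTanGap μ (Icc α β)) :
    ∫ s in γ..γ', 2 * tan ((β - α - hv.width * (s - γ)) / 2) * (2 * s) ≤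
      ∫ x in α..β, (min (v x) γ' ^ 2 - γ ^ 2) ∂μ := by
  have hαβ : α ≤ β := hv.left_lt.le.trans (hv.mid_le.trans hv.right_lt.le)
  have hcos : ∀ s ∈ Icc γ γ', cos ((β - α - hv.width * (s - γ)) / 2) ≠ 0 := by
    intro s hs
    have hlower := mul_nonneg hv.width_pos.le (sub_nonneg.2 hs.1)
    have hupper : hv.width * (s - γ) ≤ hv.width * (γ' - γ) :=
      mul_le_mul_of_nonneg_left (by linarith [hs.2]) hv.width_pos.le
    rw [hv.width_mul] at hupper
    exact (cos_pos_of_mem_Ioo ⟨by linarith [pi_pos, hv.mid_le], by linarith⟩).ne'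
  have htan : ContinuousOn (fun s ↦ 2 * tan ((β - α - hv.width * (s - γ)) / 2)) (Icc γ γ') :=
    continuousOn_const.mul (continuousOn_tan.comp (by fun_prop) hcos)
  rw [intervalIntegral.integral_of_le hαβ]
  refine integral_mul_le_integral_sq_sub_sq (by fun_prop) hγ hv.level_lt.le ?_
    (.of_forall fun x ↦ min_le_right _ _) htan
    fun s hs ↦ hv.two_mul_tan_le_measureReal hμ hs
  filter_upwards [ae_restrict_mem measurableSet_Ioc] with x hx
  exact le_min (hv.level_le_apply (Ioc_subset_Icc_self hx)) hv.level_lt.le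

lemma integral_truncation_add_le (hv : IsTrapezoid v γ γ' α α' β' β) (hcont : Continuous v)
    (hγ : 0 ≤ γ) :
    (∫ x in α..β, (min (v x) γ' ^ 2 - γ ^ 2) ∂μ) + ∫ x in α'..β', (v x ^ 2 - γ' ^ 2) ∂μ ≤
      ∫ x in α..β, (v x ^ 2 - γ ^ 2) ∂μ := by
  have hint : ∀ {f : ℝ → ℝ}, Continuous f → IntervalIntegrable f μ α β :=
    fun hf ↦ hf.intervalIntegrable _ _
  have hexcess : ∫ x in α'..β', (v x ^ 2 - γ' ^ 2) ∂μ ≤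
      ∫ x in α..β, (v x ^ 2 - min (v x) γ' ^ 2) ∂μ := by
    calc ∫ x in α'..β', (v x ^ 2 - γ' ^ 2) ∂μ
        = ∫ x in α'..β', (v x ^ 2 - min (v x) γ' ^ 2) ∂μ := by
          refine intervalIntegral.integral_congr fun x hx ↦ ?_
          rw [uIcc_of_le hv.mid_le] at hx
          simp only [min_eq_right (hv.le_mid x hx)]
      _ ≤ ∫ x in α..β, (v x ^ 2 - min (v x) γ' ^ 2) ∂μ := by
          refine intervalIntegral.integral_mono_interval hv.left_lt.le hv.mid_le hv.right_lt.le
            ?_ (hint (by fun_prop))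
          filter_upwards [ae_restrict_mem measurableSet_Ioc] with x hx
          have hγx := hγ.trans
            (le_min (hv.level_le_apply (Ioc_subset_Icc_self hx)) hv.level_lt.le)
          exact sub_nonneg.2 (pow_le_pow_left₀ hγx (min_le_left _ _) 2)
  calc (∫ x in α..β, (min (v x) γ' ^ 2 - γ ^ 2) ∂μ) + ∫ x in α'..β', (v x ^ 2 - γ' ^ 2) ∂μ
      ≤ (∫ x in α..β, (min (v x) γ' ^ 2 - γ ^ 2) ∂μ) +
          ∫ x in α..β, (v x ^ 2 - min (v x) γ' ^ 2) ∂μ := by gcongr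
    _ = ∫ x in α..β, (v x ^ 2 - γ ^ 2) ∂μ := by
        rw [← intervalIntegral.integral_add (hint (by fun_prop)) (hint (by fun_prop))]
        exact intervalIntegral.integral_congr fun x _ ↦ by ring

lemma levelEnergy_le (hv : IsTrapezoid v γ γ' α α' β' β) {C : NNReal} (hlip : LipschitzWith C v)
    (hγ : 0 ≤ γ) (hπ : β - α < π) (hμ : HasTanGap μ (Icc α β)) :
    levelEnergy μ v γ' α' β' ≤ levelEnergy μ v γ α β := by
  have hcont : Continuous v := hlip.continuous
  have hwidth := hv.width_pos
  have hcalc := level_primitive_sub_le_integral (L := β - α + hv.width * γ) hwidth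
    hv.level_lt.le (by linarith) (by linarith [hv.width_mul, hv.mid_le])
  simp only [show ∀ s, β - α + hv.width * γ - hv.width * s = β - α - hv.width * (s - γ) from
    fun s ↦ by ring, sub_self, mul_zero, sub_zero] at hcalc
  rw [show β - α - hv.width * (γ' - γ) = β' - α' by rw [hv.width_mul]; ring] at hcalc
  have hlayer : (∫ s in γ..γ', 4 * tan ((β - α - hv.width * (s - γ)) / 2) * (2 * s)) ≤
      2 * ∫ x in α..β, (min (v x) γ' ^ 2 - γ ^ 2) ∂μ := by
    refine le_trans (le_of_eq ?_)
      (mul_le_mul_of_nonneg_left (hv.integral_tan_le hcont hγ hπ hμ) zero_le_two)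
    rw [← intervalIntegral.integral_const_mul]
    exact intervalIntegral.integral_congr fun s _ ↦ by ring
  have htrunc := hv.integral_truncation_add_le (μ := μ) hcont hγ
  have hflank := hv.integral_left_add_right_le
  rw [mul_sub, sub_div] at hflank
  have hmass := hv.integral_sq_left_add_right
  have hderiv_split : (∫ x in α..α', deriv v x ^ 2) + (∫ x in α'..β', deriv v x ^ 2) +
      (∫ x in β'..β, deriv v x ^ 2) = ∫ x in α..β, deriv v x ^ 2 := by
    rw [intervalIntegral.integral_add_adjacent_intervals,
      intervalIntegral.integral_add_adjacent_intervals] <;>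
    exact intervalIntegrable_deriv_sq hlip _ _
  have hmass_split : (∫ x in α..α', v x ^ 2) + (∫ x in α'..β', v x ^ 2) +
      (∫ x in β'..β, v x ^ 2) = ∫ x in α..β, v x ^ 2 := by
    rw [intervalIntegral.integral_add_adjacent_intervals,
      intervalIntegral.integral_add_adjacent_intervals] <;>
    exact (hcont.pow 2).intervalIntegrable _ _
  unfold levelEnergy
  linarith

end IsTrapezoid

namespace IsAffineOn

variable {v : ℝ → ℝ} {p q x m : ℝ}

lemma le_apply (hv : IsAffineOn v (Icc p q)) (hp : m ≤ v p) (hq : m ≤ v q) (hx : x ∈ Icc p q) :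
    m ≤ v x := by
  obtain ⟨k, c, hkc⟩ := hv
  have hpq := hx.1.trans hx.2
  rw [hkc p (left_mem_Icc.2 hpq)] at hp
  rw [hkc q (right_mem_Icc.2 hpq)] at hq
  rw [hkc x hx]
  rcases le_total 0 k with hk | hk
  · linarith [mul_le_mul_of_nonneg_left hx.1 hk]
  · linarith [mul_le_mul_of_nonpos_left hx.2 hk]

lemma apply_le (hv : IsAffineOn v (Icc p q)) (hp : v p ≤ m) (hq : v q ≤ m) (hx : x ∈ Icc p q) :
    v x ≤ m := by
  obtain ⟨k, c, hkc⟩ := hv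
  refine neg_le_neg_iff.1 (le_apply (v := fun x ↦ -v x) ⟨-k, -c, fun y hy ↦ ?_⟩
    (neg_le_neg hp) (neg_le_neg hq) hx)
  simp only [hkc y hy]
  ring

end IsAffineOn

/-- `v` is a Lipschitz piecewise affine function all of whose break points lie in `N`. -/
structure IsPolygonal (N : Finset ℝ) (v : ℝ → ℝ) : Prop where
  lipschitz : ∃ C, LipschitzWith C v
  affine : ∀ p q, (∀ x ∈ N, x ∉ Ioo p q) → IsAffineOn v (Icc p q)

lemma levelEnergy_nonneg_of_const {μ : Measure ℝ} {v : ℝ → ℝ} {γ α β : ℝ} (hαβ : α ≤ β)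
    (hπ : β - α < π) (hv : ∀ x ∈ Icc α β, v x = γ) : 0 ≤ levelEnergy μ v γ α β := by
  rcases hαβ.eq_or_lt with rfl | hαβ'
  · simp [levelEnergy]
  have haffine : IsAffineOn v (Icc α β) := ⟨0, γ, fun x hx ↦ by rw [hv x hx]; ring⟩
  have hα := hv α (left_mem_Icc.2 hαβ)
  have hβ := hv β (right_mem_Icc.2 hαβ)
  have hpot : ∫ x in α..β, (v x ^ 2 - γ ^ 2) ∂μ = 0 := by
    refine intervalIntegral.integral_zero_ae (.of_forall fun x hx ↦ ?_)
    rw [hv x (uIcc_of_le hαβ ▸ uIoc_subset_uIcc hx), sub_self]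
  have htan := le_tan (x := (β - α) / 2) (by linarith) (by linarith)
  rw [levelEnergy, haffine.integral_deriv_sq hαβ', haffine.integral_sq hαβ, hpot, hα, hβ]
  linarith [mul_le_mul_of_nonneg_right htan (sq_nonneg γ),
    show (γ - γ) ^ 2 / (β - α) = 0 by simp]

namespace IsPolygonal

variable {N : Finset ℝ} {v : ℝ → ℝ} {α c β γ : ℝ}

lemma continuous (hv : IsPolygonal N v) : Continuous v :=
  let ⟨_, hC⟩ := hv.lipschitz
  hC.continuous

lemma exists_isTrapezoid (hv : IsPolygonal N v) {p q : ℝ} (hp : p ∈ Ioo α β) (hq : q ∈ Ioo α β)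
    (hc : c ∈ Icc p q) (hleft : ∀ x ∈ N, x ∉ Ioo α p) (hright : ∀ x ∈ N, x ∉ Ioo q β)
    (hα : v α = γ) (hβ : v β = γ) (hγc : γ < v c) (hmin : ∀ x ∈ Icc p q, v c ≤ v x) :
    ∃ α' ∈ Ioc α p, ∃ β' ∈ Ico q β, IsTrapezoid v γ (v c) α α' β' β := by
  have haff_left := hv.affine α p hleft
  have haff_right := hv.affine q β hright
  have hpq := hc.1.trans hc.2
  have hcp := hmin p (left_mem_Icc.2 hpq)
  have hcq := hmin q (right_mem_Icc.2 hpq)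
  obtain ⟨α', hα', hvα'⟩ := intermediate_value_Icc hp.1.le hv.continuous.continuousOn
    (show v c ∈ Icc (v α) (v p) from ⟨hα ▸ hγc.le, hcp⟩)
  obtain ⟨β', hβ', hvβ'⟩ := intermediate_value_Icc' hq.2.le hv.continuous.continuousOn
    (show v c ∈ Icc (v β) (v q) from ⟨hβ ▸ hγc.le, hcq⟩)
  have hαα' : α < α' := hα'.1.lt_of_ne (by rintro rfl; exact hγc.ne (hα.symm.trans hvα'))
  have hβ'β : β' < β := hβ'.2.lt_of_ne (by rintro rfl; exact hγc.ne (hβ.symm.trans hvβ'))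
  refine ⟨α', ⟨hαα', hα'.2⟩, β', ⟨hβ'.1, hβ'β⟩, hγc, hαα', hα'.2.trans (hpq.trans hβ'.1), hβ'β,
    haff_left.mono (Icc_subset_Icc_right hα'.2), haff_right.mono (Icc_subset_Icc_left hβ'.1),
    hα, hvα', hvβ', hβ, fun x hx ↦ ?_⟩
  rcases le_total x p with hxp | hpx
  · exact (haff_left.mono (Icc_subset_Icc_left hα'.1)).le_apply hvα'.ge hcp ⟨hx.1, hxp⟩
  rcases le_total x q with hxq | hqx
  · exact hmin x ⟨hpx, hxq⟩
  · exact (haff_right.mono (Icc_subset_Icc_right hβ'.2)).le_apply hcq hvβ'.ge ⟨hqx, hx.2⟩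

variable {μ : Measure ℝ} [IsFiniteMeasure μ]

lemma exists_levelEnergy_le (hv : IsPolygonal N v) (hμ : HasTanGap μ (Icc α β))
    (hπ : β - α < π) (hγ : 0 ≤ γ) (hα : v α = γ) (hβ : v β = γ) (hle : ∀ x ∈ Icc α β, γ ≤ v x)
    (hnodes : (N.filter (· ∈ Ioo α β)).Nonempty) :
    ∃ α' c β', α ≤ α' ∧ α' ≤ c ∧ c ≤ β' ∧ β' ≤ β ∧ v α' = v c ∧ v β' = v c ∧
      (∀ x ∈ Icc α' β', v c ≤ v x) ∧ (∃ x ∈ N, x ∈ Ioo α β \ Ioo α' c) ∧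
      (∃ x ∈ N, x ∈ Ioo α β \ Ioo c β') ∧ levelEnergy μ v (v c) α' β' ≤ levelEnergy μ v γ α β := by
  have hfirst := Finset.mem_filter.1 (Finset.min'_mem _ hnodes)
  have hlast := Finset.mem_filter.1 (Finset.max'_mem _ hnodes)
  have hbefore : ∀ x ∈ N, x ∉ Ioo α (Finset.min' _ hnodes) := fun x hxN hx ↦
    (Finset.min'_le _ x (Finset.mem_filter.2 ⟨hxN, hx.1, hx.2.trans hfirst.2.2⟩)).not_gt hx.2
  have hafter : ∀ x ∈ N, x ∉ Ioo (Finset.max' _ hnodes) β := fun x hxN hx ↦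
    (Finset.le_max' _ x (Finset.mem_filter.2 ⟨hxN, hlast.2.1.trans hx.1, hx.2⟩)).not_gt hx.1
  obtain ⟨c, hc, hmin⟩ := isCompact_Icc.exists_isMinOn
    (nonempty_Icc.2 (Finset.min'_le_max' _ hnodes)) hv.continuous.continuousOn
  rcases (hle c ⟨hfirst.2.1.le.trans hc.1, hc.2.trans hlast.2.2.le⟩).eq_or_lt with rfl | hγc
  · exact ⟨α, c, β, le_rfl, hfirst.2.1.le.trans hc.1, hc.2.trans hlast.2.2.le, le_rfl, hα, hβ, hle,
      ⟨_, hlast.1, hlast.2, fun h ↦ hc.2.not_gt h.2⟩,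
      ⟨_, hfirst.1, hfirst.2, fun h ↦ hc.1.not_gt h.1⟩, le_rfl⟩
  · obtain ⟨C, hlip⟩ := hv.lipschitz
    obtain ⟨α', hα', β', hβ', htrap⟩ :=
      hv.exists_isTrapezoid hfirst.2 hlast.2 hc hbefore hafter hα hβ hγc hmin
    exact ⟨α', c, β', hα'.1.le, hα'.2.trans hc.1, hc.2.trans hβ'.1, hβ'.2.le, htrap.apply_left',
      htrap.apply_right', htrap.le_mid, ⟨_, hlast.1, hlast.2, fun h ↦ hc.2.not_gt h.2⟩,
      ⟨_, hfirst.1, hfirst.2, fun h ↦ hc.1.not_gt h.1⟩, htrap.levelEnergy_le hlip hγ hπ hμ⟩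

lemma levelEnergy_nonneg (hv : IsPolygonal N v) (hμ : HasTanGap μ (Icc α β)) (hαβ : α ≤ β)
    (hπ : β - α < π) (hγ : 0 ≤ γ) (hα : v α = γ) (hβ : v β = γ)
    (hle : ∀ x ∈ Icc α β, γ ≤ v x) : 0 ≤ levelEnergy μ v γ α β := by
  induction hn : (N.filter (· ∈ Ioo α β)).card using Nat.strong_induction_on
    generalizing α β γ with
  | _ n ih =>
  rcases (N.filter (· ∈ Ioo α β)).eq_empty_or_nonempty with hempty | hnodes
  · have haffine := hv.affine α β fun x hxN hx ↦
      Finset.notMem_empty x (hempty ▸ Finset.mem_filter.2 ⟨hxN, hx⟩)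
    exact levelEnergy_nonneg_of_const hαβ hπ fun x hx ↦
      (haffine.apply_le hα.le hβ.le hx).antisymm (hle x hx)
  obtain ⟨α', c, β', hαα', hα'c, hcβ', hβ'β, hvα', hvβ', hle', hleft, hright, henergy⟩ :=
    hv.exists_levelEnergy_le hμ hπ hγ hα hβ hle hnodes
  have hγc : 0 ≤ v c := hγ.trans (hle c ⟨hαα'.trans hα'c, hcβ'.trans hβ'β⟩)
  have hsub : ∀ {s t}, α' ≤ s → s ≤ t → t ≤ β' → v s = v c → v t = v c →
      (∃ x ∈ N, x ∈ Ioo α β \ Ioo s t) → 0 ≤ levelEnergy μ v (v c) s t := by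
    rintro s t hs hst ht hvs hvt ⟨x, hxN, hx, hxst⟩
    have hcount : (N.filter (· ∈ Ioo s t)).card < n := by
      rw [← hn]
      exact Finset.card_lt_card <| (Finset.ssubset_iff_of_subset <|
        Finset.monotone_filter_right N fun y _ hy ↦
          Ioo_subset_Ioo (hαα'.trans hs) (ht.trans hβ'β) hy).2
        ⟨x, Finset.mem_filter.2 ⟨hxN, hx⟩, fun hmem ↦ hxst (Finset.mem_filter.1 hmem).2⟩
    exact ih _ hcount (hμ.mono (Icc_subset_Icc (hαα'.trans hs) (ht.trans hβ'β))) hst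
      (by linarith) hγc hvs hvt (fun y hy ↦ hle' y ⟨hs.trans hy.1, hy.2.trans ht⟩) rfl
  obtain ⟨C, hlip⟩ := hv.lipschitz
  calc 0 ≤ levelEnergy μ v (v c) α' c + levelEnergy μ v (v c) c β' :=
        add_nonneg (hsub le_rfl hα'c hcβ' hvα' rfl hleft) (hsub hα'c hcβ' le_rfl rfl hvβ' hright)
    _ ≤ levelEnergy μ v (v c) α' β' := levelEnergy_add_le hlip hα'c hcβ' (by linarith)
    _ ≤ levelEnergy μ v γ α β := henergy

end IsPolygonal

namespace IsAffineOn

variable {v w : ℝ → ℝ} {s : Set ℝ}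

lemma add (hv : IsAffineOn v s) (hw : IsAffineOn w s) : IsAffineOn (fun x ↦ v x + w x) s := by
  obtain ⟨k, c, hkc⟩ := hv
  obtain ⟨k', c', hkc'⟩ := hw
  exact ⟨k + k', c + c', fun x hx ↦ by simp only [hkc x hx, hkc' x hx]; ring⟩

lemma const_mul (hv : IsAffineOn v s) (r : ℝ) : IsAffineOn (fun x ↦ r * v x) s := by
  obtain ⟨k, c, hkc⟩ := hv
  exact ⟨r * k, r * c, fun x hx ↦ by simp only [hkc x hx]; ring⟩

end IsAffineOn

/-- The function rising from `0` at `a` to `δ` at `a + δ` with slope one, constant elsewhere. -/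
def ramp (a δ x : ℝ) : ℝ := max 0 (min (x - a) δ)

lemma ramp_of_le {a δ x : ℝ} (hδ : 0 ≤ δ) (hx : x ≤ a) : ramp a δ x = 0 := by
  rw [ramp, min_eq_left (by linarith), max_eq_left (by linarith)]

lemma ramp_of_mem_Icc {a δ x : ℝ} (hx : x ∈ Icc a (a + δ)) : ramp a δ x = x - a := by
  rw [ramp, min_eq_left (by linarith [hx.2]), max_eq_right (by linarith [hx.1])]

lemma ramp_of_ge {a δ x : ℝ} (hδ : 0 ≤ δ) (hx : a + δ ≤ x) : ramp a δ x = δ := by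
  rw [ramp, min_eq_right (by linarith), max_eq_right hδ]

lemma lipschitzWith_ramp (a δ : ℝ) : LipschitzWith 1 (ramp a δ) := by
  have hshift : LipschitzWith 1 fun x : ℝ ↦ x - a := (IsometryEquiv.subRight a).isometry.lipschitz
  exact (hshift.min_const δ).const_max 0

namespace IsPolygonal

variable {N N' : Finset ℝ} {v w : ℝ → ℝ}

lemma const (c : ℝ) : IsPolygonal ∅ fun _ ↦ c :=
  ⟨⟨0, LipschitzWith.const c⟩, fun _ _ _ ↦ ⟨0, c, fun _ _ ↦ by ring⟩⟩

lemma add (hv : IsPolygonal N v) (hw : IsPolygonal N' w) :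
    IsPolygonal (N ∪ N') fun x ↦ v x + w x := by
  obtain ⟨C, hC⟩ := hv.lipschitz
  obtain ⟨C', hC'⟩ := hw.lipschitz
  exact ⟨⟨C + C', hC.add hC'⟩, fun p q hpq ↦
    (hv.affine p q fun x hx ↦ hpq x (Finset.mem_union_left _ hx)).add
      (hw.affine p q fun x hx ↦ hpq x (Finset.mem_union_right _ hx))⟩

lemma const_mul (hv : IsPolygonal N v) (r : ℝ) : IsPolygonal N fun x ↦ r * v x := by
  obtain ⟨C, hC⟩ := hv.lipschitz
  exact ⟨⟨_, (lipschitzWith_smul r).comp hC⟩, fun p q hpq ↦ (hv.affine p q hpq).const_mul r⟩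

lemma ramp {δ : ℝ} (a : ℝ) (hδ : 0 ≤ δ) : IsPolygonal {a, a + δ} (ramp a δ) := by
  refine ⟨⟨1, lipschitzWith_ramp a δ⟩, fun p q hpq ↦ ?_⟩
  have ha := hpq a (by simp)
  have hb := hpq (a + δ) (by simp)
  rw [mem_Ioo, not_and_or, not_lt, not_lt] at ha hb
  rcases ha with hap | hqa
  · rcases hb with hbp | hqb
    · exact ⟨0, δ, fun x hx ↦ by rw [ramp_of_ge hδ (hbp.trans hx.1)]; ring⟩
    · exact ⟨1, -a, fun x hx ↦ by rw [ramp_of_mem_Icc ⟨hap.trans hx.1, hx.2.trans hqb⟩]; ring⟩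
  · exact ⟨0, 0, fun x hx ↦ by rw [ramp_of_le hδ (hx.2.trans hqa)]; ring⟩

end IsPolygonal

/-- The piecewise affine function interpolating `z` at the `n + 1` nodes `α + k δ`, `k ≤ n`, and
constant to the left and to the right of them. -/
def interpolant (z : ℝ → ℝ) (α δ : ℝ) (n : ℕ) (x : ℝ) : ℝ :=
  z α + ∑ k ∈ Finset.range n,
    (z (α + (k + 1 : ℕ) * δ) - z (α + k * δ)) / δ * ramp (α + k * δ) δ x

section interpolant

variable {z : ℝ → ℝ} {α δ x : ℝ} {k n : ℕ}

lemma interpolant_succ : interpolant z α δ (n + 1) x = interpolant z α δ n x +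
    (z (α + (n + 1 : ℕ) * δ) - z (α + n * δ)) / δ * ramp (α + n * δ) δ x := by
  rw [interpolant, Finset.sum_range_succ, ← add_assoc, interpolant]

lemma exists_isPolygonal_interpolant (z : ℝ → ℝ) (α : ℝ) (hδ : 0 ≤ δ) (n : ℕ) :
    ∃ N, IsPolygonal N (interpolant z α δ n) := by
  induction n with
  | zero =>
    have hzero : interpolant z α δ 0 = fun _ ↦ z α := funext fun x ↦ by simp [interpolant]
    exact ⟨∅, hzero ▸ IsPolygonal.const (z α)⟩
  | succ n ih =>
    obtain ⟨N, hN⟩ := ih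
    rw [show interpolant z α δ (n + 1) = _ from funext fun x ↦ interpolant_succ]
    exact ⟨_, hN.add ((IsPolygonal.ramp _ hδ).const_mul _)⟩

lemma interpolant_of_ge (hδ : 0 < δ) (hx : α + n * δ ≤ x) :
    interpolant z α δ n x = z (α + n * δ) := by
  induction n with
  | zero => simp [interpolant]
  | succ n ih =>
    push_cast at hx
    rw [interpolant_succ, ih (by linarith), ramp_of_ge hδ.le (by linarith),
      div_mul_cancel₀ _ hδ.ne']
    ring

lemma interpolant_of_le (hδ : 0 < δ) (hkn : k ≤ n) (hx : x ≤ α + k * δ) :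
    interpolant z α δ n x = interpolant z α δ k x := by
  induction n, hkn using Nat.le_induction with
  | base => rfl
  | succ n hkn ih =>
    have hnode : α + k * δ ≤ α + n * δ := by gcongr
    rw [interpolant_succ, ih, ramp_of_le hδ.le (hx.trans hnode), mul_zero, add_zero]

lemma interpolant_of_mem_cell (hδ : 0 < δ) (hkn : k < n)
    (hx : x ∈ Icc (α + k * δ) (α + (k + 1 : ℕ) * δ)) :
    interpolant z α δ n x = z (α + k * δ) +
      (z (α + (k + 1 : ℕ) * δ) - z (α + k * δ)) / δ * (x - (α + k * δ)) := by
  rw [interpolant_of_le hδ hkn hx.2, interpolant_succ, interpolant_of_ge hδ hx.1,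
    ramp_of_mem_Icc ⟨hx.1, hx.2.trans_eq (by push_cast; ring)⟩]

lemma interpolant_apply_node (hδ : 0 < δ) (hkn : k ≤ n) :
    interpolant z α δ n (α + k * δ) = z (α + k * δ) := by
  rw [interpolant_of_le hδ hkn le_rfl, interpolant_of_ge hδ le_rfl]

lemma isAffineOn_interpolant_cell (z : ℝ → ℝ) (α : ℝ) (hδ : 0 < δ) (hkn : k < n) :
    IsAffineOn (interpolant z α δ n) (Icc (α + k * δ) (α + (k + 1 : ℕ) * δ)) :=
  ⟨(z (α + (k + 1 : ℕ) * δ) - z (α + k * δ)) / δ,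
    z (α + k * δ) - (z (α + (k + 1 : ℕ) * δ) - z (α + k * δ)) / δ * (α + k * δ),
    fun x hx ↦ by rw [interpolant_of_mem_cell hδ hkn hx]; ring⟩

lemma exists_mem_cell (hx : x ∈ Icc α (α + n * δ)) (hn : 0 < n) :
    ∃ k < n, x ∈ Icc (α + k * δ) (α + (k + 1 : ℕ) * δ) := by
  induction n, hn using Nat.le_induction with
  | base => exact ⟨0, one_pos, by simpa using hx⟩
  | succ n _ ih =>
    rcases le_total x (α + n * δ) with h | h
    · obtain ⟨k, hkn, hk⟩ := ih ⟨hx.1, h⟩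
      exact ⟨k, hkn.trans n.lt_succ_self, hk⟩
    · exact ⟨n, n.lt_succ_self, h, hx.2⟩

lemma sq_sub_div_le_integral_deriv_sq {u : ℝ → ℝ} (hu : ContDiff ℝ 1 u) {p q : ℝ} (hpq : p < q) :
    (u q - u p) ^ 2 / (q - p) ≤ ∫ x in p..q, deriv u x ^ 2 := by
  have hderiv : Continuous (deriv u) := hu.continuous_deriv le_rfl
  have hlength := sub_pos.2 hpq
  set m := (u q - u p) / (q - p) with hm
  have hftc : ∫ x in p..q, deriv u x = u q - u p :=
    intervalIntegral.integral_deriv_eq_sub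
      (fun x _ ↦ (hu.differentiable one_ne_zero).differentiableAt)
      (hderiv.intervalIntegrable _ _)
  have hsquare : 0 ≤ ∫ x in p..q, (deriv u x - m) ^ 2 :=
    intervalIntegral.integral_nonneg hpq.le fun x _ ↦ sq_nonneg _
  have hexpand : ∫ x in p..q, (deriv u x - m) ^ 2 =
      (∫ x in p..q, deriv u x ^ 2) - 2 * m * (u q - u p) + m ^ 2 * (q - p) := by
    simp only [sub_sq]
    rw [intervalIntegral.integral_add, intervalIntegral.integral_sub]
    · rw [intervalIntegral.integral_mul_const, intervalIntegral.integral_const_mul, hftc,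
        intervalIntegral.integral_const, smul_eq_mul]
      ring
    all_goals exact Continuous.intervalIntegrable (by fun_prop) _ _
  have hvalue : (u q - u p) ^ 2 / (q - p) = 2 * m * (u q - u p) - m ^ 2 * (q - p) := by
    rw [hm]
    field_simp
    ring
  linarith

lemma integral_deriv_interpolant_sq_le {u : ℝ → ℝ} (hu : ContDiff ℝ 1 u)
    (hzu : ∀ x y, |z x - z y| ≤ |u x - u y|) (hδ : 0 < δ) :
    ∫ x in α..α + n * δ, deriv (interpolant z α δ n) x ^ 2 ≤
      ∫ x in α..α + n * δ, deriv u x ^ 2 := by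
  obtain ⟨N, hN⟩ := exists_isPolygonal_interpolant z α hδ.le n
  obtain ⟨C, hC⟩ := hN.lipschitz
  have hderiv : Continuous (deriv u) := hu.continuous_deriv le_rfl
  have hsum_interp := intervalIntegral.sum_integral_adjacent_intervals (n := n)
    (a := fun k : ℕ ↦ α + k * δ) (f := fun x ↦ deriv (interpolant z α δ n) x ^ 2)
    (μ := volume) fun k _ ↦ intervalIntegrable_deriv_sq hC _ _
  have hsum_u := intervalIntegral.sum_integral_adjacent_intervals (n := n)
    (a := fun k : ℕ ↦ α + k * δ) (f := fun x ↦ deriv u x ^ 2)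
    (μ := volume) fun k _ ↦ (hderiv.pow 2).intervalIntegrable _ _
  simp only [Nat.cast_zero, zero_mul, add_zero] at hsum_interp hsum_u
  rw [← hsum_interp, ← hsum_u]
  refine Finset.sum_le_sum fun k hk ↦ ?_
  have hkn := Finset.mem_range.1 hk
  have hcell : α + k * δ < α + (k + 1 : ℕ) * δ := by push_cast; linarith
  rw [(isAffineOn_interpolant_cell z α hδ hkn).integral_deriv_sq hcell,
    interpolant_apply_node hδ hkn.le, interpolant_apply_node hδ hkn]
  refine le_trans ?_ (sq_sub_div_le_integral_deriv_sq hu hcell)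
  exact div_le_div_of_nonneg_right (sq_le_sq.2 (hzu _ _)) (sub_pos.2 hcell).le

lemma exists_le_interpolant_le (hδ : 0 < δ) (hn : 0 < n) (hx : x ∈ Icc α (α + n * δ)) :
    ∃ y y', |x - y| ≤ δ ∧ |x - y'| ≤ δ ∧
      z y ≤ interpolant z α δ n x ∧ interpolant z α δ n x ≤ z y' := by
  obtain ⟨k, hkn, hxk⟩ := exists_mem_cell hx hn
  have haffine := isAffineOn_interpolant_cell z α hδ hkn
  have hp := interpolant_apply_node (z := z) (α := α) hδ hkn.le
  have hq := interpolant_apply_node (z := z) (α := α) hδ (Nat.succ_le_of_lt hkn)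
  have hlength : α + (k + 1 : ℕ) * δ = α + k * δ + δ := by push_cast; ring
  have hp_near : |x - (α + k * δ)| ≤ δ := by
    rw [abs_of_nonneg (sub_nonneg.2 hxk.1)]
    linarith [hxk.2]
  have hq_near : |x - (α + (k + 1 : ℕ) * δ)| ≤ δ := by
    rw [abs_of_nonpos (sub_nonpos.2 hxk.2)]
    linarith [hxk.1]
  rcases le_total (z (α + k * δ)) (z (α + (k + 1 : ℕ) * δ)) with h | h
  · exact ⟨_, _, hp_near, hq_near,
      haffine.le_apply hp.ge (hq.symm ▸ h) hxk, haffine.apply_le (hp.symm ▸ h) hq.le hxk⟩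
  · exact ⟨_, _, hq_near, hp_near,
      haffine.le_apply (hp.symm ▸ h) hq.ge hxk, haffine.apply_le hp.le (hq.symm ▸ h) hxk⟩

end interpolant

lemma IsPolygonal.four_mul_integral_sq_le {N : Finset ℝ} {v : ℝ → ℝ} (hv : IsPolygonal N v)
    {μ : Measure ℝ} [IsFiniteMeasure μ] {α β : ℝ} (hμ : HasTanGap μ (Icc α β)) (hαβ : α ≤ β)
    (hπ : β - α < π) (hα : v α = 0) (hβ : v β = 0) (hnonneg : ∀ x ∈ Icc α β, 0 ≤ v x) :
    4 * ∫ x in α..β, v x ^ 2 ≤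
      (∫ x in α..β, deriv v x ^ 2) + 2 * ∫ x in α..β, v x ^ 2 ∂μ := by
  have henergy := hv.levelEnergy_nonneg hμ hαβ hπ le_rfl hα hβ hnonneg
  simp only [levelEnergy, ne_eq, OfNat.ofNat_ne_zero, not_false_eq_true, zero_pow, sub_zero,
    mul_zero, add_zero] at henergy
  linarith

lemma abs_posPart_abs_sub_sub_le (s t ε : ℝ) :
    |max (|s| - ε) 0 - max (|t| - ε) 0| ≤ |s - t| :=
  (abs_max_sub_max_le_abs _ _ _).trans <| by
    rw [sub_sub_sub_cancel_right]
    exact abs_abs_sub_abs_le_abs_sub s t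

lemma exists_isPolygonal_truncation {u : ℝ → ℝ} (hu : ContDiff ℝ 1 u) (huc : UniformContinuous u)
    {α β ε : ℝ} (hαβ : α < β) (hε : 0 < ε) (hα : |u α| ≤ ε) (hβ : |u β| ≤ ε) :
    ∃ N v, IsPolygonal N v ∧ v α = 0 ∧ v β = 0 ∧
      (∀ x ∈ Icc α β, max (|u x| - 2 * ε) 0 ≤ v x ∧ v x ≤ |u x|) ∧
      ∫ x in α..β, deriv v x ^ 2 ≤ ∫ x in α..β, deriv u x ^ 2 := by
  obtain ⟨η, hη, hmod⟩ := Metric.uniformContinuous_iff.1 huc ε hε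
  obtain ⟨n, hn⟩ := exists_nat_gt ((β - α) / η)
  have hn_pos : 0 < (n : ℝ) := (div_pos (sub_pos.2 hαβ) hη).trans hn
  set δ := (β - α) / n with hδ_def
  have hδ : 0 < δ := div_pos (sub_pos.2 hαβ) hn_pos
  have hδη : δ < η := by rwa [hδ_def, div_lt_comm₀ hn_pos hη]
  have hβ_node : α + n * δ = β := by rw [hδ_def]; field_simp; ring
  set z : ℝ → ℝ := fun x ↦ max (|u x| - ε) 0
  have hnode : ∀ {k : ℕ}, k ≤ n → interpolant z α δ n (α + k * δ) = z (α + k * δ) :=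
    fun hk ↦ interpolant_apply_node hδ hk
  obtain ⟨N, hN⟩ := exists_isPolygonal_interpolant z α hδ.le n
  refine ⟨N, interpolant z α δ n, hN, ?_, ?_, fun x hx ↦ ?_, ?_⟩
  · have hstart := hnode n.zero_le
    rw [Nat.cast_zero, zero_mul, add_zero] at hstart
    rw [hstart]
    exact max_eq_right (sub_nonpos.2 hα)
  · rw [← hβ_node, hnode le_rfl, hβ_node]
    exact max_eq_right (sub_nonpos.2 hβ)
  · obtain ⟨y, y', hxy, hxy', hyv, hvy'⟩ := exists_le_interpolant_le (z := z) hδ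
      (Nat.cast_pos.1 hn_pos) (hβ_node.symm ▸ hx)
    have hclose : ∀ {w}, |x - w| ≤ δ → |(|u x| - |u w|)| ≤ ε := fun hw ↦
      (abs_abs_sub_abs_le_abs_sub _ _).trans (hmod (hw.trans_lt hδη)).le
    have hy := abs_le.1 (hclose hxy)
    have hy' := abs_le.1 (hclose hxy')
    exact ⟨(max_le_max_right 0 (by linarith [hy.2])).trans hyv,
      hvy'.trans (max_le (by linarith [hy'.1]) (abs_nonneg _))⟩
  · simpa only [hβ_node] using integral_deriv_interpolant_sq_le (z := z) (α := α) (n := n) hu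
      (fun x y ↦ abs_posPart_abs_sub_sub_le (u x) (u y) ε) hδ

lemma four_mul_integral_truncation_sq_le {μ : Measure ℝ} [IsFiniteMeasure μ] {u : ℝ → ℝ}
    (hu : ContDiff ℝ 1 u) (huc : UniformContinuous u) {α β ε : ℝ} (hαβ : α < β)
    (hπ : β - α < π) (hμ : HasTanGap μ (Icc α β)) (hε : 0 < ε) (hα : |u α| ≤ ε)
    (hβ : |u β| ≤ ε) :
    4 * ∫ x in α..β, max (|u x| - 2 * ε) 0 ^ 2 ≤
      (∫ x in α..β, deriv u x ^ 2) + 2 * ∫ x in α..β, u x ^ 2 ∂μ := by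
  obtain ⟨N, v, hv, hvα, hvβ, hbracket, hderiv⟩ :=
    exists_isPolygonal_truncation hu huc hαβ hε hα hβ
  have hnonneg : ∀ x ∈ Icc α β, 0 ≤ v x := fun x hx ↦ (le_max_right _ _).trans (hbracket x hx).1
  have hucont := hu.continuous
  have hvcont := hv.continuous
  calc 4 * ∫ x in α..β, max (|u x| - 2 * ε) 0 ^ 2 ≤ 4 * ∫ x in α..β, v x ^ 2 := by
        gcongr
        refine intervalIntegral.integral_mono_on hαβ.le
          (Continuous.intervalIntegrable (by fun_prop) _ _)
          (Continuous.intervalIntegrable (by fun_prop) _ _) fun x hx ↦ ?_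
        exact pow_le_pow_left₀ (le_max_right _ _) (hbracket x hx).1 2
    _ ≤ (∫ x in α..β, deriv v x ^ 2) + 2 * ∫ x in α..β, v x ^ 2 ∂μ :=
        hv.four_mul_integral_sq_le hμ hαβ.le hπ hvα hvβ hnonneg
    _ ≤ (∫ x in α..β, deriv u x ^ 2) + 2 * ∫ x in α..β, u x ^ 2 ∂μ := by
        gcongr
        refine intervalIntegral.integral_mono_on hαβ.le
          (Continuous.intervalIntegrable (by fun_prop) _ _)
          (Continuous.intervalIntegrable (by fun_prop) _ _) fun x hx ↦ ?_
        rw [← sq_abs (u x)]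
        exact pow_le_pow_left₀ (hnonneg x hx) (hbracket x hx).2 2

lemma ofReal_intervalIntegral_eq_setLIntegral {μ : Measure ℝ} [IsLocallyFiniteMeasure μ]
    {f : ℝ → ℝ} (hf : Continuous f) (hf_nonneg : ∀ x, 0 ≤ f x) {α β : ℝ} (hαβ : α ≤ β) :
    ENNReal.ofReal (∫ x in α..β, f x ∂μ) = ∫⁻ x in Ioc α β, ENNReal.ofReal (f x) ∂μ := by
  rw [intervalIntegral.integral_of_le hαβ, ofReal_integral_eq_lintegral_ofReal
    (hf.integrableOn_Icc.mono_set Ioc_subset_Icc_self) (.of_forall hf_nonneg)]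

lemma four_mul_setLIntegral_truncation_sq_le {μ : Measure ℝ} {u : ℝ → ℝ}
    (hu : ContDiff ℝ 1 u) (huc : UniformContinuous u) {α β ε : ℝ} (hαβ : α < β)
    (hπ : β - α < π) (hμ : HasTanGap μ (Icc α β)) (hfin : μ (Ioc α β) ≠ ∞) (hε : 0 < ε)
    (hα : |u α| ≤ ε) (hβ : |u β| ≤ ε) :
    4 * ∫⁻ x in Ioc α β, ENNReal.ofReal (max (|u x| - 2 * ε) 0 ^ 2) ≤
      (∫⁻ x in Ioc α β, ENNReal.ofReal (deriv u x ^ 2)) +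
        2 * ∫⁻ x in Ioc α β, ENNReal.ofReal (u x ^ 2) ∂μ := by
  have : Fact (μ (Ioc α β) < ∞) := ⟨hfin.lt_top⟩
  have hucont := hu.continuous
  have := hu.continuous_deriv le_rfl
  have hreal := ENNReal.ofReal_le_ofReal
    (four_mul_integral_truncation_sq_le hu huc hαβ hπ hμ.restrict_Ioc hε hα hβ)
  rw [ENNReal.ofReal_add (intervalIntegral.integral_nonneg hαβ.le fun x _ ↦ sq_nonneg _)
      (mul_nonneg zero_le_two (intervalIntegral.integral_nonneg hαβ.le fun x _ ↦ sq_nonneg _)),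
    ENNReal.ofReal_mul zero_le_four, ENNReal.ofReal_mul zero_le_two,
    ofReal_intervalIntegral_eq_setLIntegral (by fun_prop) (fun x ↦ sq_nonneg _) hαβ.le,
    ofReal_intervalIntegral_eq_setLIntegral (by fun_prop) (fun x ↦ sq_nonneg _) hαβ.le,
    ofReal_intervalIntegral_eq_setLIntegral (by fun_prop) (fun x ↦ sq_nonneg _) hαβ.le,
    Measure.restrict_restrict measurableSet_Ioc, inter_self] at hreal
  simpa using hreal

lemma uniformContinuous_of_eq_zero_off_Ioo {u : ℝ → ℝ} (hu : Continuous u) {e₁ e₂ : ℝ}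
    (hzero : ∀ x ∉ Ioo e₁ e₂, u x = 0) : UniformContinuous u :=
  (HasCompactSupport.intro isCompact_Icc
    fun x hx ↦ hzero x fun h ↦ hx (Ioo_subset_Icc_self h)).uniformContinuous_of_continuous hu

lemma exists_Icc_subset_Ioo_abs_le {u : ℝ → ℝ} (hu : UniformContinuous u) {e₁ e₂ ε : ℝ}
    (he : e₁ < e₂) (hzero : ∀ x ∉ Ioo e₁ e₂, u x = 0) (hε : 0 < ε) :
    ∃ α ∈ Ioo e₁ e₂, ∃ β ∈ Ioo e₁ e₂, α < β ∧ ∀ x ∉ Ioo α β, |u x| ≤ ε := by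
  obtain ⟨η, hη, hmod⟩ := Metric.uniformContinuous_iff.1 hu ε hε
  set ρ := min (η / 2) ((e₂ - e₁) / 3)
  have hρ : 0 < ρ := lt_min (by positivity) (by linarith)
  have hρη : ρ < η := (min_le_left _ _).trans_lt (by linarith)
  have hρe : ρ ≤ (e₂ - e₁) / 3 := min_le_right _ _
  have hsmall : ∀ x e, u e = 0 → |x - e| ≤ ρ → |u x| ≤ ε := fun x e he hx ↦ by
    simpa [Real.dist_eq, he] using (hmod (hx.trans_lt hρη)).le
  have he₁ := hzero e₁ fun h ↦ lt_irrefl _ h.1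
  have he₂ := hzero e₂ fun h ↦ lt_irrefl _ h.2
  refine ⟨e₁ + ρ, ⟨by linarith, by linarith⟩, e₂ - ρ, ⟨by linarith, by linarith⟩, by linarith,
    fun x hx ↦ ?_⟩
  by_cases hxe : x ∈ Ioo e₁ e₂
  · rcases not_and_or.1 hx with h | h
    · exact hsmall x e₁ he₁ (by rw [abs_of_pos (sub_pos.2 hxe.1)]; linarith)
    · exact hsmall x e₂ he₂ (by rw [abs_of_neg (sub_neg.2 hxe.2)]; linarith)
  · simpa [hzero x hxe] using hε.le

lemma lintegral_sq_le_of_forall_truncation_le {μ : Measure ℝ} {u : ℝ → ℝ} (hu : Continuous u)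
    {c : ℝ≥0∞} (hc : ∀ ε > 0, ∫⁻ x, ENNReal.ofReal (max (|u x| - 2 * ε) 0 ^ 2) ∂μ ≤ c) :
    ∫⁻ x, ENNReal.ofReal (u x ^ 2) ∂μ ≤ c := by
  have hlim : ∀ x, Tendsto (fun n : ℕ ↦ ENNReal.ofReal
      (max (|u x| - 2 * (1 / ((n : ℝ) + 1))) 0 ^ 2)) atTop (nhds (ENNReal.ofReal (u x ^ 2))) := by
    intro x
    have hshift := (tendsto_one_div_add_atTop_nhds_zero_nat (𝕜 := ℝ)).const_mul 2 |>.const_sub |u x|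
    have hmax := (hshift.max (tendsto_const_nhds (x := (0 : ℝ)))).pow 2
    rw [mul_zero, sub_zero, max_eq_left (abs_nonneg _), sq_abs] at hmax
    exact ENNReal.tendsto_ofReal hmax
  calc ∫⁻ x, ENNReal.ofReal (u x ^ 2) ∂μ
      = ∫⁻ x, liminf (fun n : ℕ ↦ ENNReal.ofReal
          (max (|u x| - 2 * (1 / ((n : ℝ) + 1))) 0 ^ 2)) atTop ∂μ :=
        lintegral_congr fun x ↦ (hlim x).liminf_eq.symm
    _ ≤ liminf (fun n : ℕ ↦ ∫⁻ x, ENNReal.ofReal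
          (max (|u x| - 2 * (1 / ((n : ℝ) + 1))) 0 ^ 2) ∂μ) atTop :=
        lintegral_liminf_le fun n ↦ by fun_prop
    _ ≤ c := liminf_le_of_frequently_le' <|
        Frequently.of_forall fun n ↦ hc _ Nat.one_div_pos_of_nat

theorem HasTanGap.four_mul_lintegral_sq_le {μ : Measure ℝ} {e₁ e₂ : ℝ}
    (hμ : HasTanGap μ (Ioo e₁ e₂)) (hπ : e₂ - e₁ ≤ π)
    (hfin : ∀ x ∈ Ioo e₁ e₂, ∀ y ∈ Ioo e₁ e₂, μ (Ioc x y) ≠ ∞) {u : ℝ → ℝ}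
    (hu : TestFun e₁ e₂ u) :
    4 * ∫⁻ x in Ioo e₁ e₂, ENNReal.ofReal (u x ^ 2) ≤
      (∫⁻ x in Ioo e₁ e₂, ENNReal.ofReal (deriv u x ^ 2)) +
        2 * ∫⁻ x in Ioo e₁ e₂, ENNReal.ofReal (u x ^ 2) ∂μ := by
  obtain ⟨hsmooth, hzero⟩ := hu
  rcases le_or_gt e₂ e₁ with he | he
  · simp [Ioo_eq_empty he.not_gt]
  have huc := uniformContinuous_of_eq_zero_off_Ioo hsmooth.continuous hzero
  rw [mul_comm, ← ENNReal.le_div_iff_mul_le (.inl four_ne_zero) (.inl ENNReal.ofNat_ne_top)]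
  refine lintegral_sq_le_of_forall_truncation_le hsmooth.continuous fun ε hε ↦ ?_
  rw [ENNReal.le_div_iff_mul_le (.inl four_ne_zero) (.inl ENNReal.ofNat_ne_top), mul_comm]
  obtain ⟨α, hα, β, hβ, hαβ, hsmall⟩ := exists_Icc_subset_Ioo_abs_le huc he hzero hε
  have hIoc : Ioc α β ⊆ Ioo e₁ e₂ := fun x hx ↦ ⟨hα.1.trans hx.1, hx.2.trans_lt hβ.2⟩
  have hsupport : ∀ x ∈ Ioo e₁ e₂ \ Ioc α β, ENNReal.ofReal (max (|u x| - 2 * ε) 0 ^ 2) = 0 := by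
    intro x hx
    have := hsmall x fun h ↦ hx.2 (Ioo_subset_Ioc_self h)
    simp [max_eq_right (show |u x| - 2 * ε ≤ 0 by linarith)]
  rw [← lintegral_inter_add_sdiff _ (Ioo e₁ e₂) (measurableSet_Ioc (a := α) (b := β)),
    inter_eq_right.2 hIoc,
    setLIntegral_eq_zero (measurableSet_Ioo.diff measurableSet_Ioc) hsupport, add_zero]
  refine (four_mul_setLIntegral_truncation_sq_le hsmooth huc hαβ (by linarith [hα.1, hβ.2])
    (hμ.mono fun x hx ↦ ⟨hα.1.trans_le hx.1, hx.2.trans_lt hβ.2⟩) (hfin α hα β hβ) hε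
    (hsmall α fun h ↦ lt_irrefl _ h.1) (hsmall β fun h ↦ lt_irrefl _ h.2)).trans ?_
  gcongr

lemma sub_le_integral_of_riccati_le {u w w' : ℝ → ℝ} (hu : ContDiff ℝ 1 u) {p q B : ℝ}
    (hpq : p ≤ q) (hw : ∀ x ∈ Icc p q, HasDerivAt w (w' x) x)
    (hB : ∀ x ∈ Icc p q, w' x + w x ^ 2 ≤ B) :
    w q * u q ^ 2 - w p * u p ^ 2 ≤ (∫ x in p..q, deriv u x ^ 2) + B * ∫ x in p..q, u x ^ 2 := by
  have hcont := hu.continuous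
  have := hu.continuous_deriv le_rfl
  have hderiv : ∀ x ∈ Icc p q, HasDerivAt (fun x ↦ w x * u x ^ 2)
      (w' x * u x ^ 2 + w x * (2 * u x * deriv u x)) x := fun x hx ↦
    ((hw x hx).mul ((hu.differentiable one_ne_zero x).hasDerivAt.pow 2)).congr_deriv (by simp)
  have hsub := intervalIntegral.sub_le_integral_of_hasDeriv_right_of_le
    (φ := fun x ↦ deriv u x ^ 2 + B * u x ^ 2) hpq
    (fun x hx ↦ (hderiv x hx).continuousAt.continuousWithinAt)
    (fun x hx ↦ (hderiv x (Ioo_subset_Icc_self hx)).hasDerivWithinAt)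
    (Continuous.integrableOn_Icc (by fun_prop))
    (fun x hx ↦ by
      nlinarith [mul_le_mul_of_nonneg_right (hB x (Ioo_subset_Icc_self hx)) (sq_nonneg (u x)),
        sq_nonneg (deriv u x - w x * u x)])
  rwa [intervalIntegral.integral_add (Continuous.intervalIntegrable (by fun_prop) _ _)
      (Continuous.intervalIntegrable (by fun_prop) _ _),
    intervalIntegral.integral_const_mul] at hsub

lemma hasDerivAt_neg_const_mul_tan {k c x : ℝ} (h : |k * (x - c)| < π / 2) :
    HasDerivAt (fun x ↦ -k * tan (k * (x - c))) (-k ^ 2 * (1 + tan (k * (x - c)) ^ 2)) x := by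
  have hcos : cos (k * (x - c)) ≠ 0 := (cos_pos_of_mem_Ioo (abs_lt.1 h)).ne'
  have hlin : HasDerivAt (fun x ↦ k * (x - c)) k x := by
    simpa using ((hasDerivAt_id x).sub_const c).const_mul k
  refine (((hasDerivAt_tan hcos).comp x hlin).const_mul (-k)).congr_deriv ?_
  rw [← inv_one_add_tan_sq hcos]
  field_simp

lemma sq_mul_integral_sq_le_add_boundary {u : ℝ → ℝ} (hu : ContDiff ℝ 1 u) {p q k : ℝ}
    (hpq : p ≤ q) (hk : 0 ≤ k) (hkπ : k * (q - p) < π) :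
    k ^ 2 * ∫ x in p..q, u x ^ 2 ≤
      (∫ x in p..q, deriv u x ^ 2) + k * tan (k * (q - p) / 2) * (u p ^ 2 + u q ^ 2) := by
  have hmem : ∀ x ∈ Icc p q, |k * (x - (p + q) / 2)| < π / 2 := fun x hx ↦ by
    have : |x - (p + q) / 2| ≤ (q - p) / 2 := abs_le.2 ⟨by linarith [hx.1], by linarith [hx.2]⟩
    rw [abs_mul, abs_of_nonneg hk]
    linarith [mul_le_mul_of_nonneg_left this hk]
  have hric := sub_le_integral_of_riccati_le (B := -k ^ 2) hu hpq
    (fun x hx ↦ hasDerivAt_neg_const_mul_tan (hmem x hx)) (fun x _ ↦ by ring_nf; rfl)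
  rw [show k * (q - (p + q) / 2) = k * (q - p) / 2 by ring,
    show k * (p - (p + q) / 2) = -(k * (q - p) / 2) by ring, tan_neg] at hric
  linarith

lemma mul_boundary_le_integral {u : ℝ → ℝ} (hu : ContDiff ℝ 1 u) {p q : ℝ} (hpq : p < q) (W : ℝ) :
    W * (u p ^ 2 + u q ^ 2) ≤
      (∫ x in p..q, deriv u x ^ 2) + (2 * W / (q - p) + W ^ 2) * ∫ x in p..q, u x ^ 2 := by
  have hlen := sub_pos.2 hpq
  set s := 2 * W / (q - p) with hs
  have hsW : s * (q - p) = 2 * W := by rw [hs]; field_simp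
  have hric := sub_le_integral_of_riccati_le (w := fun x ↦ s * (x - (p + q) / 2))
    (w' := fun _ ↦ s) (B := s + W ^ 2) hu hpq.le
    (fun x _ ↦ by simpa using ((hasDerivAt_id x).sub_const _).const_mul s)
    (fun x hx ↦ by
      have : W ^ 2 - (s * (x - (p + q) / 2)) ^ 2 = s ^ 2 * ((x - p) * (q - x)) := by
        linear_combination (-(W / 2) - s * (q - p) / 4) * hsW
      nlinarith [mul_nonneg (sub_nonneg.2 hx.1) (sub_nonneg.2 hx.2), sq_nonneg s])
  rw [show s * (q - (p + q) / 2) = W by linarith, show s * (p - (p + q) / 2) = -W by linarith]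
    at hric
  linarith

theorem sq_mul_integral_sq_le_add_center {u : ℝ → ℝ} (hu : ContDiff ℝ 1 u) {R δ k : ℝ}
    (hδ : 0 < δ) (hδR : δ ≤ R) (hk : 0 ≤ k) (hkπ : k * (R - δ) < π) (hleft : u (-R) = 0)
    (hright : u R = 0) :
    k ^ 2 * ∫ x in -R..R, u x ^ 2 ≤ (∫ x in -R..R, deriv u x ^ 2) +
      (k ^ 2 + k * tan (k * (R - δ) / 2) / δ + (k * tan (k * (R - δ) / 2)) ^ 2) *
        ∫ x in -δ..δ, u x ^ 2 := by
  have hcont := hu.continuous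
  have := hu.continuous_deriv le_rfl
  have hsplit : ∀ g : ℝ → ℝ, Continuous g → ∫ x in -R..R, g x =
      (∫ x in -R..-δ, g x) + (∫ x in -δ..δ, g x) + ∫ x in δ..R, g x := fun g hg ↦ by
    have hint := fun p q : ℝ ↦ hg.intervalIntegrable (μ := volume) p q
    rw [intervalIntegral.integral_add_adjacent_intervals (hint _ _) (hint _ _),
      intervalIntegral.integral_add_adjacent_intervals (hint _ _) (hint _ _)]
  have hL := sq_mul_integral_sq_le_add_boundary hu (neg_le_neg hδR) hk (by linarith)
  have hR := sq_mul_integral_sq_le_add_boundary hu hδR hk hkπ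
  have hM := mul_boundary_le_integral hu (neg_lt_self hδ) (k * tan (k * (R - δ) / 2))
  rw [hleft, neg_sub_neg] at hL
  rw [hright] at hR
  rw [show δ - -δ = 2 * δ by ring, mul_div_mul_left _ _ two_ne_zero] at hM
  rw [hsplit (fun x ↦ u x ^ 2) (by fun_prop), hsplit (fun x ↦ deriv u x ^ 2) (by fun_prop)]
  linarith

lemma ofReal_intervalIntegral_eq_setLIntegral_Ioo {f : ℝ → ℝ} (hf : Continuous f)
    (hf_nonneg : ∀ x, 0 ≤ f x) {α β : ℝ} (hαβ : α ≤ β) :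
    ENNReal.ofReal (∫ x in α..β, f x) = ∫⁻ x in Ioo α β, ENNReal.ofReal (f x) := by
  rw [ofReal_intervalIntegral_eq_setLIntegral hf hf_nonneg hαβ, setLIntegral_congr Ioo_ae_eq_Ioc]

lemma setLIntegral_Ioo_ofReal_sq_ne_top {u : ℝ → ℝ} (hu : Continuous u) (α β : ℝ) :
    ∫⁻ x in Ioo α β, ENNReal.ofReal (u x ^ 2) ≠ ∞ := by
  rcases le_total α β with hαβ | hβα
  · rw [← ofReal_intervalIntegral_eq_setLIntegral_Ioo (by fun_prop) (fun x ↦ sq_nonneg _) hαβ]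
    exact ENNReal.ofReal_ne_top
  · simp [Ioo_eq_empty hβα.not_gt]

theorem exists_five_mul_lintegral_sq_le : ∃ A : ℝ, 1 ≤ A ∧ ∀ u, TestFun (-(π / 2)) (π / 2) u →
    5 * ∫⁻ x in Ioo (-(π / 2)) (π / 2), ENNReal.ofReal (u x ^ 2) ≤
      (∫⁻ x in Ioo (-(π / 2)) (π / 2), ENNReal.ofReal (deriv u x ^ 2)) +
        ENNReal.ofReal A * ∫⁻ x in Ioo (-(π / 16)) (π / 16), ENNReal.ofReal (u x ^ 2) := by
  have hπ := pi_pos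
  have hk : √5 * (π / 2 - π / 16) < π := by
    nlinarith [Real.sqrt_lt_sqrt (by norm_num) (show (5 : ℝ) < (16 / 7) ^ 2 by norm_num),
      Real.sqrt_sq (show (0 : ℝ) ≤ 16 / 7 by norm_num)]
  set A := √5 ^ 2 + √5 * tan (√5 * (π / 2 - π / 16) / 2) / (π / 16) +
    (√5 * tan (√5 * (π / 2 - π / 16) / 2)) ^ 2 with hA_def
  have htan : 0 ≤ tan (√5 * (π / 2 - π / 16) / 2) :=
    tan_nonneg_of_nonneg_of_le_pi_div_two
      (div_nonneg (mul_nonneg (sqrt_nonneg _) (by linarith)) zero_le_two) (by linarith)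
  have hsqrt : √5 ^ 2 = (5 : ℝ) := Real.sq_sqrt (by norm_num)
  have hA : 5 ≤ A := by
    rw [hA_def, hsqrt, add_assoc]
    exact le_add_of_nonneg_right (by positivity)
  refine ⟨A, by linarith, fun u ⟨hu, hzero⟩ ↦ ?_⟩
  have hcont := hu.continuous
  have := hu.continuous_deriv le_rfl
  have hreal := sq_mul_integral_sq_le_add_center hu (by positivity) (by linarith) (sqrt_nonneg 5)
    hk (hzero _ (by simp)) (hzero _ (by simp))
  rw [← hA_def, hsqrt] at hreal
  rw [← ofReal_intervalIntegral_eq_setLIntegral_Ioo (by fun_prop) (fun x ↦ sq_nonneg _)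
      (by linarith),
    ← ofReal_intervalIntegral_eq_setLIntegral_Ioo (by fun_prop) (fun x ↦ sq_nonneg _)
      (by linarith),
    ← ofReal_intervalIntegral_eq_setLIntegral_Ioo (by fun_prop) (fun x ↦ sq_nonneg _)
      (by linarith), ← ENNReal.ofReal_ofNat 5, ← ENNReal.ofReal_mul (by norm_num),
    ← ENNReal.ofReal_mul (by linarith)]
  exact (ENNReal.ofReal_le_ofReal hreal).trans ENNReal.ofReal_add_le

lemma measure_le_of_forall_closedBall_le {α : Type*} [MetricSpace α] [SecondCountableTopology α]
    [MeasurableSpace α] [BorelSpace α] [HasBesicovitchCovering α] {μ ν : Measure α} [SFinite μ]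
    [IsLocallyFiniteMeasure ν] {U s : Set α} (hU : IsOpen U)
    (hball : ∀ x, ∀ r > 0, Metric.closedBall x r ⊆ U →
      μ (Metric.closedBall x r) ≤ ν (Metric.closedBall x r))
    (hs : s ⊆ U) : μ s ≤ ν s := by
  refine (Besicovitch.vitaliFamily μ).measure_le_of_frequently_le ν .rfl s fun x hx ↦ ?_
  obtain ⟨R, hR, hRU⟩ := Metric.mem_nhds_iff.1 (hU.mem_nhds (hs hx))
  refine (Besicovitch.tendsto_filterAt μ x).frequently (Eventually.frequently ?_)
  filter_upwards [Ioo_mem_nhdsGT hR] with r hr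
  exact hball x r hr.1 ((Metric.closedBall_subset_ball hr.2).trans hRU)

lemma exists_mem_Ioo_of_subset_closure {D : Set ℝ} {e₁ e₂ x y : ℝ} (hD : Ioo e₁ e₂ ⊆ closure D)
    (hx : e₁ ≤ x) (hxy : x < y) (hy : y ≤ e₂) : ∃ z ∈ D, z ∈ Ioo x y := by
  obtain ⟨c, hc⟩ := exists_between hxy
  obtain ⟨z, hz, hzD⟩ :=
    mem_closure_iff.1 (hD ⟨hx.trans_lt hc.1, hc.2.trans_le hy⟩) (Ioo x y) isOpen_Ioo hc
  exact ⟨z, hzD, hz⟩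

lemma measure_closedBall_le_of_forall_Ioc_le {μ ν : Measure ℝ} [IsFiniteMeasure ν] {D : Set ℝ}
    {e₁ e₂ : ℝ} (hD : Ioo e₁ e₂ ⊆ closure D)
    (hIoc : ∀ x ∈ D ∩ Ioo e₁ e₂, ∀ y ∈ D ∩ Ioo e₁ e₂, x < y → μ (Ioc x y) ≤ ν (Ioc x y))
    {c r : ℝ} (hr : 0 < r) (hball : Metric.closedBall c r ⊆ Ioo e₁ e₂) :
    μ (Metric.closedBall c r) ≤ ν (Metric.closedBall c r) := by
  rw [Real.closedBall_eq_Icc] at hball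
  have hleft := (hball (left_mem_Icc.2 (by linarith))).1
  have hright := (hball (right_mem_Icc.2 (by linarith))).2
  have hlim := tendsto_measure_cthickening_of_isClosed (μ := ν)
    ⟨1, one_pos, measure_ne_top _ _⟩ (Metric.isClosed_closedBall (x := c) (ε := r))
  refine ge_of_tendsto (hlim.mono_left (nhdsWithin_le_nhds (s := Ioi 0))) ?_
  filter_upwards [Ioo_mem_nhdsGT (lt_min (sub_pos.2 hleft) (sub_pos.2 hright))] with δ hδ
  obtain ⟨hδ₁, hδ₂⟩ := lt_min_iff.1 hδ.2
  rw [cthickening_closedBall hδ.1.le hr.le]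
  obtain ⟨x, hxD, hx⟩ := exists_mem_Ioo_of_subset_closure (x := c - r - δ) (y := c - r) hD
    (by linarith) (by linarith [hδ.1]) (by linarith)
  obtain ⟨y, hyD, hy⟩ := exists_mem_Ioo_of_subset_closure (x := c + r) (y := c + r + δ) hD
    (by linarith) (by linarith [hδ.1]) (by linarith)
  rw [Real.closedBall_eq_Icc, Real.closedBall_eq_Icc]
  calc μ (Icc (c - r) (c + r)) ≤ μ (Ioc x y) :=
        measure_mono fun t ht ↦ ⟨hx.2.trans_le ht.1, ht.2.trans hy.1.le⟩
    _ ≤ ν (Ioc x y) := hIoc x ⟨hxD, by linarith [hx.1], by linarith [hx.2]⟩ y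
        ⟨hyD, by linarith [hy.1], by linarith [hy.2]⟩ (by linarith [hx.2, hy.1])
    _ ≤ ν (Icc (c - (δ + r)) (c + (δ + r))) :=
        measure_mono fun t ht ↦ ⟨by linarith [hx.1, ht.1], by linarith [hy.2, ht.2]⟩

lemma measure_le_of_forall_Ioc_le {μ ν : Measure ℝ} {D : Set ℝ} {a b : ℝ}
    (hD : Ioo a b ⊆ closure D) (hab : μ (Ioc a b) ≤ ν (Ioc a b)) (hfin : ν (Ioc a b) ≠ ∞)
    (hIoc : ∀ x ∈ D ∩ Ioo a b, ∀ y ∈ D ∩ Ioo a b, x < y → μ (Ioc x y) ≤ ν (Ioc x y))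
    {s : Set ℝ} (hs : s ⊆ Ioo a b) : μ s ≤ ν s := by
  have : Fact (ν (Ioc a b) < ∞) := ⟨hfin.lt_top⟩
  have : Fact (μ (Ioc a b) < ∞) := ⟨hab.trans_lt hfin.lt_top⟩
  have hrestrict : ∀ (m : Measure ℝ) {t : Set ℝ}, t ⊆ Ioc a b → m.restrict (Ioc a b) t = m t :=
    fun m _ ht ↦ Measure.restrict_eq_self m ht
  have hle := measure_le_of_forall_closedBall_le (μ := μ.restrict (Ioc a b))
    (ν := ν.restrict (Ioc a b)) isOpen_Ioo (fun c r ↦ measure_closedBall_le_of_forall_Ioc_le hD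
      fun x hx y hy hxy ↦ by
        have hsub : Ioc x y ⊆ Ioc a b := Ioc_subset_Ioc hx.2.1.le hy.2.2.le
        rw [hrestrict μ hsub, hrestrict ν hsub]
        exact hIoc x hx y hy hxy) hs
  rwa [hrestrict μ (hs.trans Ioo_subset_Ioc_self), hrestrict ν (hs.trans Ioo_subset_Ioc_self)]
    at hle

theorem restrict_Ioo_le_of_forall_Ioc_le {μ ν : Measure ℝ} {D : Set ℝ} {e₁ e₂ : ℝ}
    (hD : Ioo e₁ e₂ ⊆ closure D)
    (hIoc : ∀ x ∈ D ∩ Ioo e₁ e₂, ∀ y ∈ D ∩ Ioo e₁ e₂, x < y → μ (Ioc x y) ≤ ν (Ioc x y))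
    (hfin : ∀ x ∈ Ioo e₁ e₂, ∀ y ∈ Ioo e₁ e₂, ν (Ioc x y) ≠ ∞) :
    μ.restrict (Ioo e₁ e₂) ≤ ν.restrict (Ioo e₁ e₂) := by
  rcases le_or_gt e₂ e₁ with he | he
  · simp [Ioo_eq_empty he.not_gt]
  obtain ⟨c, hc⟩ := exists_between he
  obtain ⟨a, ha, hac, hlima⟩ := exists_seq_strictAnti_tendsto' hc.1
  obtain ⟨b, hb, hbc, hlimb⟩ := exists_seq_strictMono_tendsto' hc.2
  have hmono : Monotone fun n ↦ Ioo (a n) (b n) := fun _ _ hij ↦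
    Ioo_subset_Ioo (ha.antitone hij) (hb.monotone hij)
  rw [← iUnion_Ioo_of_mono_of_isGLB_of_isLUB ha.antitone hb.monotone
    (isGLB_of_tendsto_atTop ha.antitone hlima) (isLUB_of_tendsto_atTop hb.monotone hlimb),
    Measure.le_iff]
  intro S hS
  rw [Measure.restrict_iUnion_apply_eq_iSup hmono.directed_le hS,
    Measure.restrict_iUnion_apply_eq_iSup hmono.directed_le hS]
  refine iSup_mono fun n ↦ ?_
  rw [Measure.restrict_apply hS, Measure.restrict_apply hS]
  obtain ⟨x, hxD, hx⟩ := exists_mem_Ioo_of_subset_closure hD le_rfl (hac n).1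
    ((hac n).2.le.trans hc.2.le)
  obtain ⟨y, hyD, hy⟩ := exists_mem_Ioo_of_subset_closure hD (hc.1.le.trans (hbc n).1.le)
    (hbc n).2 le_rfl
  have hxy : x < y := hx.2.trans ((hac n).2.trans ((hbc n).1.trans hy.1))
  have hx' : x ∈ Ioo e₁ e₂ := ⟨hx.1, hxy.trans hy.2⟩
  have hy' : y ∈ Ioo e₁ e₂ := ⟨hx.1.trans hxy, hy.2⟩
  have hsub : Ioo x y ⊆ Ioo e₁ e₂ := Ioo_subset_Ioo hx.1.le hy.2.le
  exact measure_le_of_forall_Ioc_le (hsub.trans hD) (hIoc x ⟨hxD, hx'⟩ y ⟨hyD, hy'⟩ hxy)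
    (hfin x hx' y hy') (fun s hs t ht ↦ hIoc s ⟨hs.1, hsub hs.2⟩ t ⟨ht.1, hsub ht.2⟩)
    (inter_subset_right.trans (Ioo_subset_Ioo hx.2.le hy.1.le))

lemma subset_closure_differentiableAt_of_concaveOn {F : ℝ → ℝ} {s : Set ℝ} (hs : IsOpen s)
    (hF : ConcaveOn ℝ s F) : s ⊆ closure {x | x ∈ s ∧ DifferentiableAt ℝ F x} := by
  intro c hc
  refine mem_closure_iff.2 fun o ho hco ↦ ?_
  obtain ⟨K, t, ht, hK⟩ := hF.locallyLipschitzOn hs hc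
  rw [hs.nhdsWithin_eq hc] at ht
  obtain ⟨p, q, hpq, hsub⟩ := mem_nhds_iff_exists_Ioo_subset.1
    (inter_mem ht (inter_mem (hs.mem_nhds hc) (ho.mem_nhds hco)))
  have hLip : LipschitzOnWith K F (Ioo p q) := hK.mono fun z hz ↦ (hsub hz).1
  obtain ⟨z, hdiff, hz⟩ := (Measure.dense_of_ae hLip.ae_differentiableWithinAt_of_mem_real)
    |>.exists_between (hpq.1.trans hpq.2)
  exact ⟨z, (hsub hz).2.2, (hsub hz).2.1, (hdiff hz).differentiableAt (isOpen_Ioo.mem_nhds hz)⟩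

lemma antitoneOn_deriv_of_concaveOn {F : ℝ → ℝ} {s : Set ℝ} (hF : ConcaveOn ℝ s F) :
    AntitoneOn (deriv F) {x | x ∈ s ∧ DifferentiableAt ℝ F x} := by
  intro x hx y hy hxy
  rcases hxy.eq_or_lt with rfl | hlt
  · rfl
  · exact (hF.deriv_le_slope hx.1 hy.1 hlt hy.2).trans (hF.slope_le_deriv hx.1 hy.1 hlt hx.2)

lemma concaveOn_log_of_concaveOn {E : Type*} [AddCommGroup E] [Module ℝ E] {f : E → ℝ} {s : Set E}
    (hpos : ∀ x ∈ s, 0 < f x) (hf : ConcaveOn ℝ s f) : ConcaveOn ℝ s fun x ↦ log (f x) := by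
  refine ⟨hf.1, fun x hx y hy a b ha hb hab ↦ ?_⟩
  calc a • log (f x) + b • log (f y) ≤ log (a • f x + b • f y) :=
        strictConcaveOn_log_Ioi.concaveOn.2 (hpos x hx) (hpos y hy) ha hb hab
    _ ≤ log (f (a • x + b • y)) := log_le_log
        (convex_Ioi (0 : ℝ) (hpos x hx) (hpos y hy) ha hb hab) (hf.2 hx hy ha hb hab)

lemma concaveOn_log_of_concaveOn_rpow {E : Type*} [AddCommGroup E] [Module ℝ E] {h : E → ℝ}
    {s : Set E} {p : ℝ} (hp : 0 < p) (hpos : ∀ x ∈ s, 0 < h x)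
    (hconc : ConcaveOn ℝ s fun x ↦ h x ^ p) : ConcaveOn ℝ s fun x ↦ log (h x) := by
  refine ((concaveOn_log_of_concaveOn (fun x hx ↦ rpow_pos_of_pos (hpos x hx) p) hconc).smul
    (inv_nonneg.2 hp.le)).congr fun x hx ↦ ?_
  simp only [smul_eq_mul, log_rpow (hpos x hx), inv_mul_cancel_left₀ hp.ne']

lemma ofReal_mul_volume_inter_le_of_antitoneOn {g : ℝ → ℝ} {D : Set ℝ} (hg : AntitoneOn g D)
    {p q κ : ℝ} (hκ : 0 ≤ κ) (hsub : Icc p q ⊆ D)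
    (hslope : ∀ x ∈ Icc p q, ∀ y ∈ Icc p q, x ≤ y → κ * (y - x) ≤ g x - g y) {x y : ℝ}
    (hx : x ∈ D) (hy : y ∈ D) :
    ENNReal.ofReal κ * volume (Ioc x y ∩ Ioo p q) ≤ ENNReal.ofReal (g x - g y) := by
  have hclamp : Ioc x y ∩ Ioo p q ⊆ Icc (max x p) (min y q) := fun z hz ↦
    ⟨max_le hz.1.1.le hz.2.1.le, le_min hz.1.2 hz.2.2.le⟩
  rcases (Ioc x y ∩ Ioo p q).eq_empty_or_nonempty with hempty | ⟨z, hz⟩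
  · simp [hempty]
  have hz' := hclamp hz
  have hx' : max x p ∈ Icc p q := ⟨le_max_right _ _, hz'.1.trans (hz'.2.trans (min_le_right _ _))⟩
  have hy' : min y q ∈ Icc p q := ⟨(le_max_right _ _).trans (hz'.1.trans hz'.2), min_le_right _ _⟩
  calc ENNReal.ofReal κ * volume (Ioc x y ∩ Ioo p q)
      ≤ ENNReal.ofReal κ * ENNReal.ofReal (min y q - max x p) := by
        gcongr
        exact (measure_mono hclamp).trans_eq volume_Icc
    _ = ENNReal.ofReal (κ * (min y q - max x p)) := (ENNReal.ofReal_mul hκ).symm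
    _ ≤ ENNReal.ofReal (g x - g y) := by
        refine ENNReal.ofReal_le_ofReal ?_
        linarith [hslope _ hx' _ hy' (hz'.1.trans hz'.2), hg hx (hsub hx') (le_max_left x p),
          hg (hsub hy') hy (min_le_left y q)]

namespace IsAffineOn

variable {h : ℝ → ℝ} {a b x y : ℝ}

lemma hasDerivAt (hh : IsAffineOn h (Icc a b)) (hx : x ∈ Ioo a b) :
    HasDerivAt h ((h b - h a) / (b - a)) x := by
  have hlin : HasDerivAt (fun y ↦ h a + (h b - h a) / (b - a) * (y - a))
      ((h b - h a) / (b - a)) x := by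
    simpa using (((hasDerivAt_id x).sub_const a).const_mul ((h b - h a) / (b - a))).const_add (h a)
  refine hlin.congr_of_eventuallyEq ?_
  filter_upwards [Icc_mem_nhds hx.1 hx.2] with y hy
  exact hh.eq_interpolation (hx.1.trans hx.2) hy

lemma pos (hh : IsAffineOn h (Icc a b)) (ha : 0 < h a) (hb : 0 < h b) (hx : x ∈ Icc a b) :
    0 < h x :=
  (lt_min ha hb).trans_le (hh.le_apply (min_le_left _ _) (min_le_right _ _) hx)

lemma hasDerivAt_log (hh : IsAffineOn h (Icc a b)) (ha : 0 < h a) (hb : 0 < h b)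
    (hx : x ∈ Ioo a b) :
    HasDerivAt (fun y ↦ Real.log (h y)) ((h b - h a) / (b - a) / h x) x :=
  (hh.hasDerivAt hx).log (hh.pos ha hb (Ioo_subset_Icc_self hx)).ne'

lemma mul_sub_le_deriv_log_sub (hh : IsAffineOn h (Icc a b)) (ha : 0 < h a) (hb : 0 < h b)
    {ℓ : ℝ} (hℓ : b - a ≤ ℓ) (hx : x ∈ Ioo a b) (hy : y ∈ Ioo a b) (hxy : x ≤ y) :
    (1 - min (h a) (h b) / max (h a) (h b)) ^ 2 / ℓ ^ 2 * (y - x) ≤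
      deriv (fun y ↦ Real.log (h y)) x - deriv (fun y ↦ Real.log (h y)) y := by
  have hab := hx.1.trans hx.2
  have hx' := Ioo_subset_Icc_self hx
  have hy' := Ioo_subset_Icc_self hy
  have hmax : 0 < max (h a) (h b) := lt_max_of_lt_left ha
  have hposx := hh.pos ha hb hx'
  have hposy := hh.pos ha hb hy'
  rw [(hh.hasDerivAt_log ha hb hx).deriv, (hh.hasDerivAt_log ha hb hy).deriv]
  set k := (h b - h a) / (b - a) with hk
  have hratio : (1 - min (h a) (h b) / max (h a) (h b)) ^ 2 / (b - a) ^ 2 =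
      k ^ 2 / max (h a) (h b) ^ 2 := by
    rw [one_sub_div hmax.ne', max_sub_min_eq_abs, hk, div_pow, div_pow, sq_abs, div_right_comm]
  have hincr : h y - h x = k * (y - x) := by
    rw [hh.eq_interpolation hab hx', hh.eq_interpolation hab hy', ← hk]
    ring
  have := sub_nonneg.2 hxy
  have := sub_pos.2 hab
  calc _ ≤ (1 - min (h a) (h b) / max (h a) (h b)) ^ 2 / (b - a) ^ 2 * (y - x) := by gcongr
    _ = k ^ 2 * (y - x) / (max (h a) (h b) * max (h a) (h b)) := by
        rw [hratio, div_mul_eq_mul_div, ← sq]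
    _ ≤ k ^ 2 * (y - x) / (h x * h y) := by
        have := hh.apply_le (le_max_left _ _) (le_max_right _ _) hx'
        have := hh.apply_le (le_max_left _ _) (le_max_right _ _) hy'
        gcongr
    _ = k / h x - k / h y := by
        rw [div_sub_div _ _ hposx.ne' hposy.ne', mul_comm (h x) k, ← mul_sub, hincr, sq, mul_assoc]

end IsAffineOn

namespace PsiA

variable (P : PsiA) {x y : ℝ}

lemma hasTanGap_nu : HasTanGap P.nu P.dom := by
  intro x hx y hy hxy
  rw [P.nu_eq hx hy hxy]
  rcases hxy.eq_or_lt with rfl | hlt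
  · simp
  · exact ENNReal.ofReal_le_ofReal (P.gap hx hy hlt)

lemma nu_Ioc_ne_top (hx : x ∈ P.dom) (hy : y ∈ P.dom) : P.nu (Ioc x y) ≠ ∞ := by
  rcases le_total x y with hxy | hyx
  · simp [P.nu_eq hx hy hxy]
  · simp [Ioc_eq_empty hyx.not_gt]

theorem nu_add_smul_volume_restrict_le {P Pf : PsiA} {F : ℝ → ℝ} {e₁ e₂ p q κ : ℝ}
    (hF : ConcaveOn ℝ (Ioo e₁ e₂) F) (hP : P.dom = Ioo e₁ e₂) (hPf : Pf.dom = Ioo e₁ e₂)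
    (hψ : ∀ x ∈ Ioo e₁ e₂, P.psi x = Pf.psi x + -deriv F x / 2) (hκ : 0 ≤ κ)
    (hsub : Icc p q ⊆ {x | x ∈ Ioo e₁ e₂ ∧ DifferentiableAt ℝ F x})
    (hslope : ∀ x ∈ Icc p q, ∀ y ∈ Icc p q, x ≤ y → κ * (y - x) ≤ deriv F x - deriv F y) :
    (Pf.nu + ENNReal.ofReal (κ / 2) • volume.restrict (Ioo p q)).restrict (Ioo e₁ e₂) ≤
      P.nu.restrict (Ioo e₁ e₂) := by
  have hanti := antitoneOn_deriv_of_concaveOn hF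
  refine restrict_Ioo_le_of_forall_Ioc_le
    (subset_closure_differentiableAt_of_concaveOn isOpen_Ioo hF) ?_
    fun x hx y hy ↦ P.nu_Ioc_ne_top (hP ▸ hx) (hP ▸ hy)
  rintro x ⟨hxD, hx⟩ y ⟨hyD, hy⟩ hxy
  have hgap := ofReal_mul_volume_inter_le_of_antitoneOn
    (g := fun x ↦ deriv F x / 2) (fun s hs t ht hst ↦ by linarith [hanti hs ht hst])
    (div_nonneg hκ zero_le_two) hsub
    (fun s hs t ht hst ↦ by linarith [hslope s hs t ht hst]) hxD hyD
  rw [Measure.add_apply, Measure.smul_apply, Measure.restrict_apply measurableSet_Ioc,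
    P.nu_eq (hP ▸ hx) (hP ▸ hy) hxy.le, Pf.nu_eq (hPf ▸ hx) (hPf ▸ hy) hxy.le, hψ x hx, hψ y hy,
    smul_eq_mul]
  calc _ ≤ ENNReal.ofReal (Pf.psi y - Pf.psi x) +
        ENNReal.ofReal (deriv F x / 2 - deriv F y / 2) := by gcongr
    _ = ENNReal.ofReal (Pf.psi y - Pf.psi x + (deriv F x / 2 - deriv F y / 2)) :=
        (ENNReal.ofReal_add (sub_nonneg.2 (Pf.mono (hPf ▸ hx) (hPf ▸ hy) hxy.le))
          (by linarith [hanti hxD hyD hxy.le])).symm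
    _ = _ := by congr 1; ring

end PsiA

lemma add_mul_le_of_mul_le_of_mul_le {s t A N G J R R' : ℝ≥0∞} (hst : s + t = 1)
    (h₄ : 4 * N ≤ G + 2 * R) (h₅ : 5 * N ≤ G + A * J) (hR : R + t * A / 2 * J ≤ R') :
    (4 + t) * N ≤ G + 2 * R' := by
  have hs : s ≤ 1 := hst ▸ le_self_add
  calc (4 + t) * N = (4 * (s + t) + t) * N := by rw [hst, mul_one]
    _ = s * (4 * N) + t * (5 * N) := by ring
    _ ≤ s * (G + 2 * R) + t * (G + A * J) := by gcongr
    _ = (s + t) * G + s * (2 * R) + t * A * J := by ring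
    _ ≤ G + 2 * R + 2 * (t * A / 2 * J) := by
        rw [hst, one_mul, ← mul_assoc 2 (t * A / 2),
          ENNReal.mul_div_cancel two_ne_zero ENNReal.ofNat_ne_top]
        exact add_le_add_left (add_le_add_right (mul_le_of_le_one_left zero_le hs) _) _
    _ = G + 2 * (R + t * A / 2 * J) := by ring
    _ ≤ G + 2 * R' := by gcongr

lemma add_mul_lintegral_sq_le {μ ν : Measure ℝ} {e₁ e₂ A t : ℝ} {u : ℝ → ℝ}
    (hμ : HasTanGap μ (Ioo e₁ e₂)) (hI : Ioo e₁ e₂ ⊆ Ioo (-(π / 2)) (π / 2))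
    (hfin : ∀ x ∈ Ioo e₁ e₂, ∀ y ∈ Ioo e₁ e₂, μ (Ioc x y) ≠ ∞)
    (hJ : Ioo (-(π / 16)) (π / 16) ⊆ Ioo e₁ e₂) (ht₀ : 0 ≤ t) (ht₁ : t ≤ 1)
    (hA : 5 * ∫⁻ x in Ioo (-(π / 2)) (π / 2), ENNReal.ofReal (u x ^ 2) ≤
      (∫⁻ x in Ioo (-(π / 2)) (π / 2), ENNReal.ofReal (deriv u x ^ 2)) +
        ENNReal.ofReal A * ∫⁻ x in Ioo (-(π / 16)) (π / 16), ENNReal.ofReal (u x ^ 2))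
    (hν : (μ + ENNReal.ofReal (t * A / 2) • volume.restrict (Ioo (-(π / 16)) (π / 16))).restrict
      (Ioo e₁ e₂) ≤ ν.restrict (Ioo e₁ e₂)) (hu : TestFun e₁ e₂ u) :
    (4 + ENNReal.ofReal t) * ∫⁻ x in Ioo e₁ e₂, ENNReal.ofReal (u x ^ 2) ≤
      (∫⁻ x in Ioo (-(π / 2)) (π / 2), ENNReal.ofReal (deriv u x ^ 2)) +
        2 * ∫⁻ x in Ioo e₁ e₂, ENNReal.ofReal (u x ^ 2) ∂ν := by
  have hlen : e₂ - e₁ ≤ π := by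
    have : (0 : ℝ) ∈ Ioo e₁ e₂ := hJ ⟨by linarith [pi_pos], by linarith [pi_pos]⟩
    have := (Ioo_subset_Ioo_iff (this.1.trans this.2)).1 hI
    linarith
  have hcmp := lintegral_mono' hν (le_refl fun x ↦ ENNReal.ofReal (u x ^ 2))
  rw [Measure.restrict_add, lintegral_add_measure, Measure.restrict_smul, lintegral_smul_measure,
    Measure.restrict_restrict measurableSet_Ioo, inter_eq_right.2 hJ, smul_eq_mul] at hcmp
  have hfour := (hμ.four_mul_lintegral_sq_le hlen hfin hu).trans
    (add_le_add_left (lintegral_mono_set hI) _)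
  refine add_mul_le_of_mul_le_of_mul_le (s := ENNReal.ofReal (1 - t)) ?_ hfour
    ((mul_le_mul_right (lintegral_mono_set hI) 5).trans hA) ?_
  · rw [← ENNReal.ofReal_add (sub_nonneg.2 ht₁) ht₀, sub_add_cancel, ENNReal.ofReal_one]
  · rwa [← ENNReal.ofReal_mul ht₀, ← ENNReal.ofReal_ofNat 2, ← ENNReal.ofReal_div_of_pos two_pos]

lemma eq_zero_of_notMem_of_setLIntegral_sq_eq_zero {u : ℝ → ℝ} (hu : Continuous u) {e₁ e₂ : ℝ}
    {s : Set ℝ} (hs : s.OrdConnected) (hzero : ∀ x ∉ Ioo e₁ e₂, u x = 0)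
    (hint : ∫⁻ x in Ioo e₁ e₂ \ s, ENNReal.ofReal (u x ^ 2) = 0) {x : ℝ} (hx : x ∉ s) :
    u x = 0 := by
  by_cases hxI : x ∈ Ioo e₁ e₂
  swap
  · exact hzero x hxI
  have hae : u =ᵐ[volume.restrict (Ioo e₁ e₂ \ s)] 0 := by
    rw [lintegral_eq_zero_iff (by fun_prop)] at hint
    filter_upwards [hint] with y hy
    exact pow_eq_zero_iff two_ne_zero |>.1
      (le_antisymm (ENNReal.ofReal_eq_zero.1 hy) (sq_nonneg (u y)))
  have hside : Ioc e₁ x ⊆ Ioo e₁ e₂ \ s ∨ Ico x e₂ ⊆ Ioo e₁ e₂ \ s := by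
    by_contra! h
    obtain ⟨⟨y, hy, hys⟩, z, hz, hzs⟩ := h.imp not_subset.1 not_subset.1
    exact hx <| hs.out (not_not.1 fun h ↦ hys ⟨⟨hy.1, hy.2.trans_lt hxI.2⟩, h⟩)
      (not_not.1 fun h ↦ hzs ⟨⟨hxI.1.trans_le hz.1, hz.2⟩, h⟩) ⟨hy.2, hz.1⟩
  rcases hside with hleft | hright
  · exact Measure.eqOn_Ioc_of_ae_eq volume (ae_restrict_of_ae_restrict_of_subset hleft hae)
      hu.continuousOn continuousOn_const ⟨hxI.1, le_rfl⟩
  · exact Measure.eqOn_Ico_of_ae_eq volume (ae_restrict_of_ae_restrict_of_subset hright hae)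
      hu.continuousOn continuousOn_const ⟨le_rfl, hxI.2⟩

namespace PsiA

variable (P : PsiA)

lemma setLIntegral_derivM (f : ℝ → ℝ≥0∞) :
    ∫⁻ x in Ioo (-(π / 2)) (π / 2), f x ∂P.derivM =
      (∫⁻ x in P.dom, f x ∂P.nu) + ∞ * ∫⁻ x in Ioo (-(π / 2)) (π / 2) \ P.dom, f x := by
  rw [derivM, Measure.restrict_add, lintegral_add_measure, Measure.restrict_smul,
    lintegral_smul_measure, Measure.restrict_restrict measurableSet_Ioo,
    Measure.restrict_restrict measurableSet_Ioo, inter_eq_right.2 P.domSub,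
    inter_eq_right.2 sdiff_subset, smul_eq_mul]

lemma le_lam1_smul_derivM {e₁ e₂ : ℝ} (hP : P.dom = Ioo e₁ e₂) {c Λ : ℝ≥0∞} (hc : c ≠ 0)
    (h : ∀ u, TestFun e₁ e₂ u → Λ * ∫⁻ x in Ioo e₁ e₂, ENNReal.ofReal (u x ^ 2) ≤
      (∫⁻ x in Ioo (-(π / 2)) (π / 2), ENNReal.ofReal (deriv u x ^ 2)) +
        c * ∫⁻ x in Ioo e₁ e₂, ENNReal.ofReal (u x ^ 2) ∂P.nu) :
    Λ ≤ lam1 (-(π / 2)) (π / 2) (c • P.derivM) := by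
  refine le_iInf₂ fun u ⟨⟨hu, hzero⟩, hne⟩ ↦ ?_
  rw [dirRQ, ENNReal.le_div_iff_mul_le (.inl hne)
    (.inl (setLIntegral_Ioo_ofReal_sq_ne_top hu.continuous _ _)), Measure.restrict_smul,
    lintegral_smul_measure, setLIntegral_derivM, smul_eq_mul]
  by_cases hout : ∫⁻ x in Ioo (-(π / 2)) (π / 2) \ P.dom, ENNReal.ofReal (u x ^ 2) = 0
  swap
  · simp [ENNReal.top_mul hout, ENNReal.mul_top hc]
  have hdom : ∀ x ∉ Ioo e₁ e₂, u x = 0 := fun x hx ↦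
    eq_zero_of_notMem_of_setLIntegral_sq_eq_zero hu.continuous P.domConn hzero hout (hP ▸ hx)
  rw [← lintegral_inter_add_sdiff _ _ P.domConn.measurableSet, hout,
    inter_eq_right.2 P.domSub, mul_zero, add_zero, add_zero, hP]
  exact h u ⟨hu, hdom⟩

end PsiA

lemma one_sub_min_div_max_sq_le_one {s t : ℝ} (hs : 0 < s) (ht : 0 < t) :
    (1 - min s t / max s t) ^ 2 ≤ 1 := by
  have : 0 ≤ min s t / max s t := by positivity
  have : min s t / max s t ≤ 1 := div_le_one_of_le₀ min_le_max (by positivity)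
  exact pow_le_one₀ (by linarith) (by linarith)

theorem refined_lower_bound_two_psi_deriv_general :
    ∃ K : ℝ, 0 < K ∧
      ∀ (d : ℝ) (h : ℝ → ℝ) (a b : ℝ),
        Ioo (-(π / 8)) (π / 8) ⊆ Icc a b →
        Icc a b ⊆ Ioo (-(d / 2)) (d / 2) →
        (∀ x ∈ Ioo (-(d / 2)) (d / 2), 0 < h x) →
        ConcaveOn ℝ (Ioo (-(d / 2)) (d / 2)) (fun x ↦ Real.log (h x)) →
        IsAffineOn h (Icc a b) →
        ∀ P Pf : PsiA,
          P.dom = Ioo (-(d / 2)) (d / 2) →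
          Pf.dom = Ioo (-(d / 2)) (d / 2) →
          (∀ x ∈ Ioo (-(d / 2)) (d / 2),
            P.psi x = Pf.psi x + (-(deriv (fun y ↦ Real.log (h y)) x)) / 2) →
          4 + ENNReal.ofReal (16 * K / π ^ 2 * (1 - min (h a) (h b) / max (h a) (h b)) ^ 2) ≤
            lam1 (-(π / 2)) (π / 2) ((2 : ℝ≥0∞) • P.derivM) := by
  obtain ⟨A, hA, hcenter⟩ := exists_five_mul_lintegral_sq_le
  have : 0 < A := by linarith
  refine ⟨1 / (16 * A), by positivity, fun d h a b hab hd hpos hconc haff P Pf hP hPf hψ ↦ ?_⟩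
  have hI : Ioo (-(d / 2)) (d / 2) ⊆ Ioo (-(π / 2)) (π / 2) := hP ▸ P.domSub
  have hab' := closure_minimal hab isClosed_Icc
  rw [closure_Ioo (by linarith [pi_pos]), Icc_subset_Icc_iff (by linarith [pi_pos])] at hab'
  have hsub : Icc (-(π / 16)) (π / 16) ⊆ Ioo a b :=
    Icc_subset_Ioo (by linarith [pi_pos]) (by linarith [pi_pos])
  have haI := hd (left_mem_Icc.2 (by linarith [pi_pos]))
  have hbI := hd (right_mem_Icc.2 (by linarith [pi_pos]))
  have hlen : b - a ≤ π := by linarith [(hI haI).1, (hI hbI).2]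
  have hcmp := PsiA.nu_add_smul_volume_restrict_le hconc hP hPf hψ (by positivity)
    (fun x hx ↦ ⟨hd (Ioo_subset_Icc_self (hsub hx)),
      (haff.hasDerivAt_log (hpos a haI) (hpos b hbI) (hsub hx)).differentiableAt⟩)
    fun x hx y hy ↦ haff.mul_sub_le_deriv_log_sub (hpos a haI) (hpos b hbI) hlen (hsub hx) (hsub hy)
  refine P.le_lam1_smul_derivM hP two_ne_zero fun u hu ↦ add_mul_lintegral_sq_le (A := A)
    (hPf ▸ Pf.hasTanGap_nu) hI (fun x hx y hy ↦ Pf.nu_Ioc_ne_top (hPf ▸ hx) (hPf ▸ hy))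
    ((Ioo_subset_Icc_self.trans hsub).trans (Ioo_subset_Icc_self.trans hd)) (by positivity) ?_
    (hcenter u ⟨hu.1, fun x hx ↦ hu.2 x fun h ↦ hx (hI h)⟩) ?_ hu
  · have hr := one_sub_min_div_max_sq_le_one (hpos a haI) (hpos b hbI)
    rw [mul_one_div, div_div, div_mul_eq_mul_div, div_le_one (by positivity)]
    nlinarith [pi_gt_three]
  · convert hcmp using 5
    field_simp

/-- Proposition 2.10 / `p:terza`: there exists an absolute constant
`K > 0` such that the following holds. Let `ψ ∈ 𝒜(I_π)` be of the form `ψ = f + g/2`,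
where `f ∈ 𝒜(I_π)` with `dom f = I_d ⊆ I_π`, and `g = -(log h)'` on `I_d` for some
`(1/m)`-concave function `h`, affine on an interval `[a,b]` with `I_{π/4} ⊆ [a,b] ⊆ I_d`.
If `λ₁(I_d, 2ψ') ≤ 15`, then
`λ₁(I_d, 2ψ') ≥ 4 + (16K/(mπ²))·(1 - min{h(a),h(b)}/max{h(a),h(b)})²`. -/
theorem refined_lower_bound_two_psi_deriv :
    ∃ K : ℝ, 0 < K ∧
      ∀ d : ℝ, 0 < d → d ≤ π →
        ∀ m : ℕ, 0 < m →
          ∀ (h : ℝ → ℝ) (a b : ℝ),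
            Ioo (-(π / 8)) (π / 8) ⊆ Icc a b →
            Icc a b ⊆ Ioo (-(d / 2)) (d / 2) →
            (∀ x ∈ Ioo (-(d / 2)) (d / 2), 0 < h x) →
            ConcaveOn ℝ (Ioo (-(d / 2)) (d / 2)) (fun x => h x ^ ((1 : ℝ) / m)) →
            (∃ s t : ℝ, ∀ x ∈ Icc a b, h x = s * x + t) →
            ∀ P Pf : PsiA,
              P.dom = Ioo (-(d / 2)) (d / 2) →
              Pf.dom = Ioo (-(d / 2)) (d / 2) →
              (∀ x ∈ Ioo (-(d / 2)) (d / 2),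
                P.psi x = Pf.psi x + (-(deriv (fun y => Real.log (h y)) x)) / 2) →
              lam1 (-(π / 2)) (π / 2) ((2 : ℝ≥0∞) • P.derivM) ≤ 15 →
              4 + ENNReal.ofReal (16 * K / (m * π ^ 2) *
                  (1 - min (h a) (h b) / max (h a) (h b)) ^ 2) ≤
                lam1 (-(π / 2)) (π / 2) ((2 : ℝ≥0∞) • P.derivM) := by
  obtain ⟨K, hK, hgeneral⟩ := refined_lower_bound_two_psi_deriv_general
  refine ⟨K, hK, fun d _ _ m hm h a b hab hd hpos hconc haff P Pf hP hPf hψ _ ↦ ?_⟩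
  have hm₁ : (1 : ℝ) ≤ m := by exact_mod_cast hm
  have hlog := concaveOn_log_of_concaveOn_rpow (by positivity) hpos hconc
  refine le_trans ?_ (hgeneral d h a b hab hd hpos hlog haff P Pf hP hPf hψ)
  gcongr
  exact le_mul_of_one_le_left (by positivity) hm₁
end
end
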